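/- Define g_{1,5}(τ) = g_{(2/5,0)}(5τ)⁵ · g_{(1/5,0)}(5τ)⁻⁵ for τ ∈ ℍ. Then the ring O_{1,5}(ℚ) of weakly holomorphic modular functions for Γ₁(5) with rational Fourier coefficients equals ℚ[g_{1,5}, g_{1,5}⁻¹, (g_{1,5}² − 11 g_{1,5} − 1)⁻¹]; that is, g_{1,5}, its reciprocal, and (g_{1,5}² − 11 g_{1,5} − 1)⁻¹ lie in O_{1,5}(ℚ), and every element of O_{1,5}(ℚ) is a polynomial in these three functions with rational coefficients. -/

import Mathlib

open Complex UpperHalfPlane Matrix MatrixGroups CongruenceSubgroup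
open scoped UpperHalfPlane Manifold Real

noncomputable section

/-- `N·τ` as a point of the upper half-plane (junk value `τ` if `N = 0`). -/
def hsmul (N : ℕ) (τ : UpperHalfPlane) : UpperHalfPlane :=
  if hN : 0 < N then
    ⟨(N : ℂ) * τ, by
      have h0 : (0 : ℝ) < (N : ℝ) := by exact_mod_cast hN
      simpa [Complex.mul_im] using mul_pos h0 τ.2⟩
  else τ

/-- The Siegel function `g_r(τ)` given by its infinite product expansion. -/
def siegel (r : ℚ × ℚ) (τ : ℍ) : ℂ :=
  -Complex.exp ((Real.pi : ℂ) * Complex.I * (((r.1 : ℂ) ^ 2 - (r.1 : ℂ) + 1 / 6) * τ)) *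
    Complex.exp ((Real.pi : ℂ) * Complex.I * (r.2 : ℂ) * ((r.1 : ℂ) - 1)) *
    (1 - Complex.exp (2 * (Real.pi : ℂ) * Complex.I * ((r.1 : ℂ) * τ + (r.2 : ℂ)))) *
    ∏' n : ℕ,
      ((1 - Complex.exp (2 * (Real.pi : ℂ) * Complex.I *
          (((n : ℂ) + 1 + (r.1 : ℂ)) * τ + (r.2 : ℂ)))) *
       (1 - Complex.exp (2 * (Real.pi : ℂ) * Complex.I *
          (((n : ℂ) + 1 - (r.1 : ℂ)) * τ - (r.2 : ℂ)))))

/-- The lattice point `ω = m·τ + n` attached to a pair `(m,n) ∈ ℤ²`. -/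
def lat (τ : ℍ) (p : ℤ × ℤ) : ℂ := (p.1 : ℂ) * τ + (p.2 : ℂ)

/-- `g₂(τ) = 60 ∑_{ω ∈ L_τ ∖ {0}} ω⁻⁴`. -/
def g2C (τ : ℍ) : ℂ := 60 * ∑' p : {p : ℤ × ℤ // p ≠ 0}, ((lat τ p.1) ^ 4)⁻¹

/-- `g₃(τ) = 140 ∑_{ω ∈ L_τ ∖ {0}} ω⁻⁶`. -/
def g3C (τ : ℍ) : ℂ := 140 * ∑' p : {p : ℤ × ℤ // p ≠ 0}, ((lat τ p.1) ^ 6)⁻¹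

/-- The discriminant `Δ(τ) = g₂(τ)³ - 27 g₃(τ)²`. -/
def discC (τ : ℍ) : ℂ := g2C τ ^ 3 - 27 * g3C τ ^ 2

/-- The Weierstrass `℘`-function relative to the lattice `L_τ = ℤτ + ℤ`. -/
def wpC (z : ℂ) (τ : ℍ) : ℂ :=
  (z ^ 2)⁻¹ + ∑' p : {p : ℤ × ℤ // p ≠ 0}, (((z - lat τ p.1) ^ 2)⁻¹ - ((lat τ p.1) ^ 2)⁻¹)

/-- The Fricke function `f_r(τ)`. -/
def fricke (r : ℚ × ℚ) (τ : ℍ) : ℂ :=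
  -(2 ^ 7 * 3 ^ 5) * (g2C τ * g3C τ / discC τ) * wpC ((r.1 : ℂ) * τ + (r.2 : ℂ)) τ

/-- The elliptic modular `j`-invariant. -/
def jinv (τ : ℍ) : ℂ := 1728 * g2C τ ^ 3 / discC τ

/-- The Dedekind eta function. -/
def etaC (τ : ℍ) : ℂ :=
  (Real.sqrt (2 * Real.pi) : ℂ) * Complex.exp (2 * (Real.pi : ℂ) * Complex.I / 16) *
    Complex.exp (2 * (Real.pi : ℂ) * Complex.I * τ / 24) *
    ∏' n : ℕ, (1 - Complex.exp (2 * (Real.pi : ℂ) * Complex.I * ((n : ℂ) + 1) * τ))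

/-- `r ∈ ℚ² ∖ ℤ²`. -/
def NonIntegral (r : ℚ × ℚ) : Prop := ¬ ∃ a b : ℤ, r = ((a : ℚ), (b : ℚ))

/-- `r ∈ (1/N)ℤ²`. -/
def InDen (N : ℕ) (r : ℚ × ℚ) : Prop := ∃ a b : ℤ, r = ((a : ℚ) / N, (b : ℚ) / N)

/-- Membership in `Γ^1(N)`: `a ≡ d ≡ 1` and `b ≡ 0 (mod N)`. -/
def GammaUpper (N : ℕ) (γ : SL(2, ℤ)) : Prop :=
  ((γ 0 0 : ℤ) : ZMod N) = 1 ∧ ((γ 1 1 : ℤ) : ZMod N) = 1 ∧ ((γ 0 1 : ℤ) : ZMod N) = 0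

/-- The transpose action `ᵗγ r = (a r₁ + c r₂, b r₁ + d r₂)` of `γ = [[a,b],[c,d]]`. -/
def tAct (γ : SL(2, ℤ)) (r : ℚ × ℚ) : ℚ × ℚ :=
  ((γ 0 0 : ℚ) * r.1 + (γ 1 0 : ℚ) * r.2, (γ 0 1 : ℚ) * r.1 + (γ 1 1 : ℚ) * r.2)

/-- The power `q^{n/d} = e^{2πi(n/d)τ}`. -/
def qpow (d : ℕ) (n : ℤ) (τ : ℍ) : ℂ :=
  Complex.exp (2 * (Real.pi : ℂ) * Complex.I * ((n : ℂ) / (d : ℂ)) * τ)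

/-- `h` is a weakly holomorphic modular function for `Γ₁(N)` with rational
Fourier coefficients: holomorphic on `ℍ`, `Γ₁(N)`-invariant, with a convergent
`q`-expansion at `i∞` having rational coefficients, and meromorphic at every cusp. -/
def IsWeaklyHolo1 (N : ℕ) (h : ℍ → ℂ) : Prop :=
  MDifferentiable 𝓘(ℂ) 𝓘(ℂ) h ∧
  (∀ γ ∈ Gamma1 N, ∀ τ : ℍ, h (γ • τ) = h τ) ∧
  (∃ n₀ : ℤ, ∃ c : ℕ → ℚ,
    ∀ τ : ℍ, HasSum (fun n : ℕ => (c n : ℂ) * qpow 1 (n₀ + n) τ) (h τ)) ∧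
  (∀ γ : SL(2, ℤ), ∃ n₀ : ℤ, ∃ c : ℕ → ℂ,
    ∀ τ : ℍ, HasSum (fun n : ℕ => c n * qpow N (n₀ + n) τ) (h (γ • τ)))

/-- `h` is a weakly holomorphic modular function for `Γ^1(N)` with rational
Fourier coefficients (the expansion at `i∞` being in powers of `q^{1/N}`). -/
def IsWeaklyHoloUp (N : ℕ) (h : ℍ → ℂ) : Prop :=
  MDifferentiable 𝓘(ℂ) 𝓘(ℂ) h ∧
  (∀ γ : SL(2, ℤ), GammaUpper N γ → ∀ τ : ℍ, h (γ • τ) = h τ) ∧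
  (∃ n₀ : ℤ, ∃ c : ℕ → ℚ,
    ∀ τ : ℍ, HasSum (fun n : ℕ => (c n : ℂ) * qpow N (n₀ + n) τ) (h τ)) ∧
  (∀ γ : SL(2, ℤ), ∃ n₀ : ℤ, ∃ c : ℕ → ℂ,
    ∀ τ : ℍ, HasSum (fun n : ℕ => c n * qpow N (n₀ + n) τ) (h (γ • τ)))

/-- The Weierstrass-unit generator
`f^1_{m,N} = (f_{(1/N,0)} - f_{(1/m,0)})/(f_{(2/m,0)} - f_{(1/m,0)})`. -/
def fUnit (m N : ℕ) (τ : ℍ) : ℂ :=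
  (fricke ((1 : ℚ) / N, 0) τ - fricke ((1 : ℚ) / m, 0) τ) /
    (fricke ((2 : ℚ) / m, 0) τ - fricke ((1 : ℚ) / m, 0) τ)

/-- `g_{1,5}(τ) = g_{(2/5,0)}(5τ)⁵ · g_{(1/5,0)}(5τ)⁻⁵`. -/
def gOne5 (τ : ℍ) : ℂ :=
  siegel ((2 : ℚ) / 5, 0) (hsmul 5 τ) ^ 5 * (siegel ((1 : ℚ) / 5, 0) (hsmul 5 τ) ^ 5)⁻¹

/-! ### The Jacobi triple product -/

/-- finite `q`-Pochhammer symbol -/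
def qPoch (q : ℂ) (m : ℕ) : ℂ := ∏ i ∈ Finset.range m, (1 - q ^ (i + 1))

/-- inverse `q`-Pochhammer symbol, extended by zero to negative indices -/
def qPochInv (q : ℂ) (m : ℤ) : ℂ := if m < 0 then 0 else (qPoch q m.toNat)⁻¹

lemma one_sub_pow_ne {q : ℂ} (hq : ‖q‖ < 1) (i : ℕ) : (1 : ℂ) - q ^ (i + 1) ≠ 0 := by
  intro h
  have h1 : q ^ (i + 1) = 1 := (sub_eq_zero.mp h).symm
  have h2 : ‖q‖ ^ (i + 1) = 1 := by rw [← norm_pow, h1, norm_one]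
  have h3 : ‖q‖ ^ (i + 1) < 1 := pow_lt_one₀ (norm_nonneg _) hq (by omega)
  linarith

lemma qPoch_ne_zero {q : ℂ} (hq : ‖q‖ < 1) (m : ℕ) : qPoch q m ≠ 0 :=
  Finset.prod_ne_zero_iff.mpr fun i _ => one_sub_pow_ne hq i

lemma qPochInv_sub_one {q : ℂ} (hq : ‖q‖ < 1) (m : ℤ) :
    qPochInv q (m - 1) = (1 - q ^ m) * qPochInv q m := by
  rcases lt_trichotomy m 0 with h | h | h
  · simp [qPochInv, h, show m < 1 by omega]
  · subst h; simp [qPochInv]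
  · obtain ⟨k, rfl⟩ : ∃ k : ℕ, m = k + 1 := ⟨(m - 1).toNat, by omega⟩
    have h1 : ¬ ((k : ℤ) + 1 < 0) := by omega
    have h2 : ((k : ℤ) + 1).toNat = k + 1 := by omega
    have h3 : (1 : ℂ) - q ^ (k + 1) ≠ 0 := one_sub_pow_ne hq k
    have h4 := qPoch_ne_zero hq k
    simp only [qPochInv, h1, if_false, h2, add_sub_cancel_right, Int.toNat_natCast]
    rw [if_neg (by omega)]
    rw [show qPoch q (k + 1) = qPoch q k * (1 - q ^ (k + 1)) from Finset.prod_range_succ _ _]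
    have : q ^ ((k : ℤ) + 1) = q ^ (k + 1) := by exact_mod_cast zpow_natCast q (k + 1)
    rw [this]
    field_simp

lemma summable_pow_succ {q : ℂ} (hq : ‖q‖ < 1) (w : ℂ) :
    Summable fun n : ℕ => ‖-(q ^ (n + 1) * w)‖ := by
  have h := (summable_geometric_of_lt_one (norm_nonneg q) hq).mul_right (‖q‖ * ‖w‖)
  refine h.congr fun n => ?_
  rw [norm_neg, norm_mul, norm_pow, pow_succ]; ring

lemma multipliable_pow_succ {q : ℂ} (hq : ‖q‖ < 1) (w : ℂ) :
    Multipliable fun n : ℕ => (1 - q ^ (n + 1) * w) := by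
  simpa [sub_eq_add_neg] using multipliable_one_add_of_summable (summable_pow_succ hq w)

lemma tendsto_qPoch {q : ℂ} (hq : ‖q‖ < 1) :
    Filter.Tendsto (qPoch q) Filter.atTop (nhds (∏' n : ℕ, (1 - q ^ (n + 1)))) := by
  have := (multipliable_pow_succ hq 1).tendsto_prod_tprod_nat
  simp only [mul_one] at this
  exact this

lemma tprod_qPoch_ne_zero {q : ℂ} (hq : ‖q‖ < 1) : ∏' n : ℕ, (1 - q ^ (n + 1)) ≠ 0 := by
  have := tprod_one_add_ne_zero_of_summable (f := fun n : ℕ => -(q ^ (n + 1) * 1))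
    (fun i => by simpa [sub_eq_add_neg] using one_sub_pow_ne hq i) (summable_pow_succ hq 1)
  simpa [sub_eq_add_neg] using this

lemma qPochInv_bdd {q : ℂ} (hq : ‖q‖ < 1) : ∃ B : ℝ, 0 ≤ B ∧ ∀ m, ‖qPochInv q m‖ ≤ B := by
  have h := ((tendsto_qPoch hq).inv₀ (tprod_qPoch_ne_zero hq)).norm
  obtain ⟨B, hB⟩ := h.bddAbove_range
  refine ⟨max B 0, le_max_right _ _, fun m => ?_⟩
  unfold qPochInv
  split_ifs
  · simp
  · exact le_max_of_le_left (hB ⟨_, rfl⟩)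

lemma qPoch_bdd {q : ℂ} (hq : ‖q‖ < 1) : ∃ B : ℝ, 0 ≤ B ∧ ∀ m, ‖qPoch q m‖ ≤ B := by
  obtain ⟨B, hB⟩ := (tendsto_qPoch hq).norm.bddAbove_range
  exact ⟨B, le_trans (norm_nonneg _) (hB ⟨0, rfl⟩), fun m => hB ⟨m, rfl⟩⟩

lemma finite_triple {q w : ℂ} (hq : ‖q‖ < 1) (hq0 : q ≠ 0) (hw : w ≠ 0) (t : ℤ → ℂ) (ht0 : t 0 = 1)
    (ht : ∀ n, t (n + 1) = q ^ n * t n) (N : ℕ) :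
    HasSum (fun n : ℤ => qPoch q (2 * N) * qPochInv q (N + n) * qPochInv q (N - n) *
      (t n * (-w) ^ n))
      (∏ k ∈ Finset.range N, ((1 - q ^ k * w) * (1 - q ^ (k + 1) * w⁻¹))) := by
  induction N with
  | zero =>
    simp only [Finset.range_zero, Finset.prod_empty]
    have := hasSum_ite_eq (0 : ℤ) (1 : ℂ)
    refine this.congr_fun fun n => ?_
    by_cases h : n = 0
    · subst h; simp [ht0, qPoch, qPochInv]
    · rw [if_neg h]
      rcases lt_or_gt_of_ne h with h1 | h1
      · simp [qPochInv, h1]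
      · simp [qPochInv, h1]
  | succ N ih =>
    rw [Finset.prod_range_succ]
    have e1 := ih.mul_left (1 + q ^ (2 * N + 1))
    have e2 := ((Equiv.subRight (1 : ℤ)).hasSum_iff.mpr ih).mul_left (-q ^ N * w)
    have e3 := ((Equiv.addRight (1 : ℤ)).hasSum_iff.mpr ih).mul_left (-q ^ (N + 1) * w⁻¹)
    have e := (e1.add e2).add e3
    have h0 : ∀ P : ℂ, P * ((1 - q ^ N * w) * (1 - q ^ (N + 1) * w⁻¹)) =
        (1 + q ^ (2 * N + 1)) * P + -q ^ N * w * P + -q ^ (N + 1) * w⁻¹ * P := by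
      intro P
      field_simp
      ring
    rw [h0]
    refine e.congr_fun fun n => ?_
    · simp only [Function.comp, Equiv.subRight_apply, Equiv.coe_addRight]
      have hnw : -w ≠ 0 := neg_ne_zero.mpr hw
      have t1 : t n = q ^ (n - 1) * t (n - 1) := by
        have := ht (n - 1); rwa [sub_add_cancel] at this
      have a1 : qPochInv q (N + n) = (1 - q ^ ((N : ℤ) + 1 + n)) * qPochInv q (N + 1 + n) := by
        rw [← qPochInv_sub_one hq]; congr 1; ring
      have a2 : qPochInv q (N - n) = (1 - q ^ ((N : ℤ) + 1 - n)) * qPochInv q (N + 1 - n) := by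
        rw [← qPochInv_sub_one hq]; congr 1; ring
      have a3 : qPochInv q (N + (n - 1)) = (1 - q ^ ((N : ℤ) + n)) * qPochInv q (N + n) := by
        rw [← qPochInv_sub_one hq]; congr 1; ring
      have a4 : qPochInv q (N - (n + 1)) = (1 - q ^ ((N : ℤ) - n)) * qPochInv q (N - n) := by
        rw [← qPochInv_sub_one hq]; congr 1; ring
      have a5 : (N : ℤ) - (n - 1) = N + 1 - n := by ring
      have a6 : (N : ℤ) + (n + 1) = N + 1 + n := by ring
      have a7 : qPoch q (2 * (N + 1)) =
          qPoch q (2 * N) * (1 - q ^ (2 * N + 1)) * (1 - q ^ (2 * N + 2)) := by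
        rw [show 2 * (N + 1) = 2 * N + 1 + 1 by ring, qPoch, Finset.prod_range_succ,
          Finset.prod_range_succ, ← qPoch]
      rw [a3, a4, a5, a6, a1, a2, a7, ht n, t1]
      push_cast
      rw [zpow_add₀ hnw, zpow_sub₀ hnw]
      simp only [zpow_add₀ hq0, zpow_sub₀ hq0, zpow_natCast, zpow_one]
      generalize qPochInv q (N + 1 + n) = X
      generalize qPochInv q (N + 1 - n) = Y
      generalize t (n - 1) = tt
      generalize qPoch q (2 * N) = Z
      have hz : q ^ n ≠ 0 := zpow_ne_zero _ hq0
      generalize (-w) ^ n = ww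
      generalize q ^ n = s at hz
      simp only [pow_add, pow_mul, pow_one]
      rw [show (q ^ 2) ^ N = (q ^ N) ^ 2 by rw [← pow_mul, ← pow_mul, mul_comm]]
      generalize q ^ N = a
      field_simp
      ring

lemma jacobi_triple {q w : ℂ} (hq : ‖q‖ < 1) (hq0 : q ≠ 0) (hw : w ≠ 0) (t : ℤ → ℂ) (ht0 : t 0 = 1)
    (ht : ∀ n, t (n + 1) = q ^ n * t n) (hs : Summable fun n : ℤ => t n * (-w) ^ n) :
    (1 - w) * ∏' n : ℕ, ((1 - q ^ (n + 1) * w) * (1 - q ^ (n + 1) * w⁻¹)) =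
      (∏' n : ℕ, (1 - q ^ (n + 1)))⁻¹ * ∑' n : ℤ, t n * (-w) ^ n := by
  set E := ∏' n : ℕ, (1 - q ^ (n + 1)) with hE
  have hE0 : E ≠ 0 := tprod_qPoch_ne_zero hq
  have l1 : Filter.Tendsto (fun N : ℕ => (1 - w) * ∏ n ∈ Finset.range N,
      ((1 - q ^ (n + 1) * w) * (1 - q ^ (n + 1) * w⁻¹))) Filter.atTop
      (nhds ((1 - w) * ∏' n : ℕ, ((1 - q ^ (n + 1) * w) * (1 - q ^ (n + 1) * w⁻¹)))) :=
    (((multipliable_pow_succ hq w).mul (multipliable_pow_succ hq w⁻¹)).tendsto_prod_tprod_nat).const_mul _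
  have key : ∀ N : ℕ, (1 - w) * ∏ n ∈ Finset.range N,
      ((1 - q ^ (n + 1) * w) * (1 - q ^ (n + 1) * w⁻¹)) =
      (1 - q ^ N * w) * ∑' n : ℤ, qPoch q (2 * N) * qPochInv q (N + n) * qPochInv q (N - n) *
      (t n * (-w) ^ n) := by
    intro N
    rw [(finite_triple hq hq0 hw t ht0 ht N).tsum_eq, Finset.prod_mul_distrib,
      Finset.prod_mul_distrib, ← mul_assoc, ← mul_assoc]
    congr 1
    have := Finset.prod_range_succ' (fun k => 1 - q ^ k * w) N
    rw [Finset.prod_range_succ] at this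
    simp only [pow_zero, one_mul] at this
    rw [mul_comm, ← this, mul_comm]
  obtain ⟨B, hB0, hB⟩ := qPochInv_bdd hq
  obtain ⟨B', hB0', hB'⟩ := qPoch_bdd hq
  have hinv : Filter.Tendsto (fun m : ℤ => qPochInv q m) Filter.atTop (nhds E⁻¹) := by
    have h1 := ((tendsto_qPoch hq).inv₀ hE0)
    have h2 : Filter.Tendsto Int.toNat Filter.atTop Filter.atTop := by
      refine Filter.tendsto_atTop.mpr fun b => ?_
      filter_upwards [Filter.eventually_ge_atTop (b : ℤ)] with a ha
      omega
    refine (h1.comp h2).congr' ?_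
    filter_upwards [Filter.eventually_ge_atTop (0 : ℤ)] with a ha
    simp [qPochInv, not_lt.mpr ha]
  have l2 : Filter.Tendsto (fun N : ℕ => ∑' n : ℤ, qPoch q (2 * N) * qPochInv q (N + n) *
      qPochInv q (N - n) * (t n * (-w) ^ n)) Filter.atTop
      (nhds (∑' n : ℤ, E * E⁻¹ * E⁻¹ * (t n * (-w) ^ n))) := by
    refine tendsto_tsum_of_dominated_convergence (bound := fun n => B' * B * B * ‖t n * (-w) ^ n‖)
      (hs.norm.mul_left _) ?_ ?_
    · intro n
      refine Filter.Tendsto.mul_const _ (Filter.Tendsto.mul (Filter.Tendsto.mul ?_ ?_) ?_)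
      · exact (tendsto_qPoch hq).comp (Filter.tendsto_id.const_mul_atTop' (by norm_num))
      · exact hinv.comp (Filter.tendsto_atTop_add_const_right _ _ tendsto_natCast_atTop_atTop)
      · exact hinv.comp (Filter.tendsto_atTop_add_const_right _ (-n) tendsto_natCast_atTop_atTop)
    · refine Filter.Eventually.of_forall fun N n => ?_
      rw [norm_mul, norm_mul, norm_mul]
      gcongr
      · exact hB' _
      · exact hB _
      · exact hB _
  have l3 : Filter.Tendsto (fun N : ℕ => 1 - q ^ N * w) Filter.atTop (nhds (1 - 0 * w)) :=
    ((tendsto_pow_atTop_nhds_zero_of_norm_lt_one hq).mul_const w).const_sub 1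
  have l4 := l3.mul l2
  simp_rw [← key] at l4
  rw [tendsto_nhds_unique l1 l4, tsum_mul_left]
  field_simp
  ring

/-! ### Theta functions and Klein forms -/

/-- the odd Jacobi theta function -/
def th (z τ : ℂ) : ℂ :=
  cexp (π * Complex.I * τ / 4 + π * Complex.I * (z + 1 / 2)) * jacobiTheta₂ (z + 1 / 2 + τ / 2) τ

/-- (unnormalised) Klein form -/
def KF (x y τ : ℂ) : ℂ := cexp (π * Complex.I * x * (x * τ + y)) * th (x * τ + y) τ

lemma exp_pi_I_add (a : ℂ) : cexp (π * Complex.I + a) = -cexp a := by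
  rw [Complex.exp_add, Complex.exp_pi_mul_I]; ring

lemma th_add_one (z τ : ℂ) : th (z + 1) τ = -th z τ := by
  unfold th
  rw [show z + 1 + 1 / 2 + τ / 2 = z + 1 / 2 + τ / 2 + 1 by ring, jacobiTheta₂_add_left,
    show (π * Complex.I * τ / 4 + π * Complex.I * (z + 1 + 1 / 2) : ℂ) =
      π * Complex.I + (π * Complex.I * τ / 4 + π * Complex.I * (z + 1 / 2)) by ring, exp_pi_I_add]
  ring

lemma th_add_tau (z τ : ℂ) : th (z + τ) τ = -cexp (-π * Complex.I * (τ + 2 * z)) * th z τ := by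
  unfold th
  rw [show z + τ + 1 / 2 + τ / 2 = z + 1 / 2 + τ / 2 + τ by ring, jacobiTheta₂_add_left',
    ← exp_pi_I_add, ← mul_assoc, ← mul_assoc, ← Complex.exp_add, ← Complex.exp_add]
  congr 1
  rw [Complex.exp_eq_exp_iff_exists_int]
  exact ⟨-1, by push_cast; ring⟩

lemma th_neg (z τ : ℂ) : th (-z) τ = -th z τ := by
  unfold th
  rw [show z + 1 / 2 + τ / 2 = (z - 1 / 2 - τ / 2) + τ + 1 by ring, jacobiTheta₂_add_left,
    jacobiTheta₂_add_left', ← jacobiTheta₂_neg_left (-z + 1 / 2 + τ / 2),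
    show -(-z + 1 / 2 + τ / 2) = z - 1 / 2 - τ / 2 by ring,
    ← mul_assoc, ← neg_mul, ← Complex.exp_add, ← exp_pi_I_add]
  congr 1
  rw [Complex.exp_eq_exp_iff_exists_int]
  exact ⟨-1, by push_cast; ring⟩

lemma th_T (z τ : ℂ) : th z (τ + 1) = cexp (π * Complex.I / 4) * th z τ := by
  unfold th
  have : jacobiTheta₂ (z + 1 / 2 + (τ + 1) / 2) (τ + 1) = jacobiTheta₂ (z + 1 / 2 + τ / 2) τ := by
    refine tsum_congr fun n => ?_
    unfold jacobiTheta₂_term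
    obtain ⟨k, hk⟩ := Int.even_mul_succ_self n
    have hk' : (n : ℂ) * (n + 1) = k + k := by exact_mod_cast hk
    rw [Complex.exp_eq_exp_iff_exists_int]
    exact ⟨k, by linear_combination (π * Complex.I : ℂ) * hk'⟩
  rw [this, ← mul_assoc, ← Complex.exp_add]
  congr 2
  ring

lemma th_S {τ : ℂ} (hτ : τ ≠ 0) : ∃ c : ℂ, c ≠ 0 ∧ ∀ z : ℂ,
    th (z / τ) (-1 / τ) = c * cexp (π * Complex.I * z ^ 2 / τ) * th z τ := by
  have hs : (-Complex.I * τ) ^ (1 / 2 : ℂ) ≠ 0 := by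
    rw [Complex.cpow_ne_zero_iff]; left
    exact mul_ne_zero (neg_ne_zero.mpr Complex.I_ne_zero) hτ
  refine ⟨(-Complex.I * τ) ^ (1 / 2 : ℂ) * cexp (-π * Complex.I / 2), mul_ne_zero hs (Complex.exp_ne_zero _),
    fun z => ?_⟩
  unfold th
  have h1 := jacobiTheta₂_functional_equation (z + τ / 2 - 1 / 2) τ
  have h2 := jacobiTheta₂_add_left (z + τ / 2 - 1 / 2) τ
  rw [show z + τ / 2 - 1 / 2 + 1 = z + 1 / 2 + τ / 2 by ring] at h2
  rw [h2, h1, show z / τ + 1 / 2 + -1 / τ / 2 = (z + τ / 2 - 1 / 2) / τ by field_simp; ring]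
  generalize jacobiTheta₂ ((z + τ / 2 - 1 / 2) / τ) (-1 / τ) = J
  rw [show (-Complex.I * τ) ^ (1 / 2 : ℂ) * cexp (-π * Complex.I / 2) * cexp (π * Complex.I * z ^ 2 / τ) *
    (cexp (π * Complex.I * τ / 4 + π * Complex.I * (z + 1 / 2)) * (1 / (-Complex.I * τ) ^ (1 / 2 : ℂ) *
      cexp (-π * Complex.I * (z + τ / 2 - 1 / 2) ^ 2 / τ) * J)) =
    (cexp (-π * Complex.I / 2) * cexp (π * Complex.I * z ^ 2 / τ) *
    cexp (π * Complex.I * τ / 4 + π * Complex.I * (z + 1 / 2)) *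
      cexp (-π * Complex.I * (z + τ / 2 - 1 / 2) ^ 2 / τ)) * J by field_simp]
  simp only [← Complex.exp_add]
  congr 2
  field_simp
  ring

lemma KF_T (x y τ : ℂ) : KF x y (τ + 1) = cexp (π * Complex.I / 4) * KF x (x + y) τ := by
  unfold KF
  rw [th_T, show x * (τ + 1) + y = x * τ + (x + y) by ring]
  ring

lemma KF_S {τ : ℂ} (hτ : τ ≠ 0) : ∃ c : ℂ, c ≠ 0 ∧ ∀ x y : ℂ,
    KF x y (-1 / τ) = c * KF y (-x) τ := by
  obtain ⟨c, hc, h⟩ := th_S hτ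
  refine ⟨c, hc, fun x y => ?_⟩
  unfold KF
  rw [show x * (-1 / τ) + y = (y * τ + -x) / τ by field_simp; ring, h]
  rw [show ∀ a b t : ℂ, a * (c * b * t) = c * (a * b * t) by intros; ring, ← Complex.exp_add,
    show π * Complex.I * x * ((y * τ + -x) / τ) + π * Complex.I * (y * τ + -x) ^ 2 / τ =
      π * Complex.I * y * (y * τ + -x) by field_simp; ring]

lemma KF_add_left (x y τ : ℂ) : KF (x + 1) y τ = -cexp (-π * Complex.I * y) * KF x y τ := by
  unfold KF
  rw [show (x + 1) * τ + y = x * τ + y + τ by ring, th_add_tau]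
  simp only [← exp_pi_I_add, ← mul_assoc]
  rw [← Complex.exp_add, ← Complex.exp_add]
  congr 2
  ring

lemma KF_add_right (x y τ : ℂ) : KF x (y + 1) τ = -cexp (π * Complex.I * x) * KF x y τ := by
  unfold KF
  rw [show x * τ + (y + 1) = x * τ + y + 1 by ring, th_add_one, ← mul_assoc, neg_mul, neg_mul,
    ← Complex.exp_add, mul_neg]
  congr 3
  ring

lemma KF_neg (x y τ : ℂ) : KF (-x) (-y) τ = -KF x y τ := by
  unfold KF
  rw [show -x * τ + -y = -(x * τ + y) by ring, th_neg]
  rw [show (π * Complex.I * -x * -(x * τ + y) : ℂ) = π * Complex.I * x * (x * τ + y) by ring]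
  ring

/-- the basic quotient of Klein forms -/
def RF (x y τ : ℂ) : ℂ := (KF (2 * x) (2 * y) τ / KF x y τ) ^ 5

lemma RF_T (x y τ : ℂ) : RF x y (τ + 1) = RF x (x + y) τ := by
  unfold RF
  rw [KF_T, KF_T, mul_div_mul_left _ _ (Complex.exp_ne_zero _), mul_add]

lemma RF_S {τ : ℂ} (hτ : τ ≠ 0) (x y : ℂ) : RF x y (-1 / τ) = RF y (-x) τ := by
  obtain ⟨c, hc, h⟩ := KF_S hτ
  unfold RF
  rw [h, h, mul_div_mul_left _ _ hc, mul_neg]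

lemma RF_SL (γ : SL(2, ℤ)) : ∀ (x y : ℂ) (τ : ℍ), RF x y ((γ • τ : ℍ) : ℂ) =
    RF ((γ 0 0 : ℤ) * x + (γ 1 0 : ℤ) * y) ((γ 0 1 : ℤ) * x + (γ 1 1 : ℤ) * y) τ := by
  have hγ : γ ∈ Subgroup.closure {ModularGroup.S, ModularGroup.T} := by
    rw [SpecialLinearGroup.SL2Z_generators]; trivial
  induction hγ using Subgroup.closure_induction with
  | mem g hg =>
    intro x y τ
    rcases hg with rfl | rfl
    · rw [UpperHalfPlane.modular_S_smul]
      have := RF_S τ.ne_zero x y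
      rw [UpperHalfPlane.coe_mk, inv_neg, ← one_div, ← neg_div, this, ModularGroup.coe_S]
      simp
    · rw [UpperHalfPlane.modular_T_smul, UpperHalfPlane.coe_vadd]
      have := RF_T x y τ
      simpa [ModularGroup.T, add_comm] using this
  | one => intro x y τ; simp
  | mul a b _ _ ha hb =>
    intro x y τ
    rw [mul_smul, ha, hb]
    congr 1 <;>
    · simp only [Matrix.SpecialLinearGroup.coe_mul, Matrix.mul_apply, Fin.sum_univ_two]
      push_cast
      ring
  | inv a _ ha =>
    intro x y τ
    have h := ha ((a⁻¹ 0 0 : ℤ) * x + (a⁻¹ 1 0 : ℤ) * y) ((a⁻¹ 0 1 : ℤ) * x + (a⁻¹ 1 1 : ℤ) * y)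
      (a⁻¹ • τ)
    rw [smul_inv_smul] at h
    rw [h]
    have hd := a.det_coe
    rw [Matrix.det_fin_two] at hd
    have hd' : (a 0 0 : ℂ) * a 1 1 - a 0 1 * a 1 0 = 1 := by exact_mod_cast hd
    rw [SpecialLinearGroup.SL2_inv_expl]
    simp only [Matrix.cons_val', Matrix.cons_val_zero, Matrix.cons_val_one,
      Matrix.empty_val', Matrix.cons_val_fin_one, Int.cast_neg]
    congr 1
    · linear_combination -x * hd'
    · linear_combination -y * hd'

lemma siegel_eq (τ : ℍ) : ∃ c : ℂ, c ≠ 0 ∧ ∀ s : ℚ, siegel (s, 0) τ = c * KF s 0 τ := by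
  set q := cexp (2 * π * Complex.I * τ) with hq
  have hq1 : ‖q‖ < 1 := UpperHalfPlane.norm_exp_two_pi_I_lt_one τ
  have hq0 : q ≠ 0 := Complex.exp_ne_zero _
  refine ⟨-(∏' n : ℕ, (1 - q ^ (n + 1)))⁻¹ * cexp (π * Complex.I * (τ / 6 - τ / 4 + 1 / 2)),
    mul_ne_zero (neg_ne_zero.mpr (inv_ne_zero (tprod_qPoch_ne_zero hq1))) (Complex.exp_ne_zero _),
    fun s => ?_⟩
  set w := cexp (2 * π * Complex.I * (s * τ)) with hw
  have term : ∀ n : ℤ, cexp (π * Complex.I * n * (n - 1) * τ) * (-w) ^ n =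
      jacobiTheta₂_term n (s * τ + 1 / 2 - τ / 2) τ := by
    intro n
    rw [hw, ← exp_pi_I_add, ← Complex.exp_int_mul, ← Complex.exp_add, jacobiTheta₂_term]
    congr 1
    ring
  have hsum := hasSum_jacobiTheta₂_term (s * τ + 1 / 2 - τ / 2) τ.im_pos
  have J := jacobi_triple hq1 hq0 (w := w) (Complex.exp_ne_zero _)
    (fun n => cexp (π * Complex.I * n * (n - 1) * τ)) (by simp)
    (fun n => by
      rw [hq, ← Complex.exp_int_mul, ← Complex.exp_add]
      congr 1
      push_cast
      ring) (by simp_rw [term]; exact hsum.summable)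
  simp_rw [term] at J
  rw [hsum.tsum_eq] at J
  have e1 : ∀ n : ℕ, cexp (2 * π * Complex.I * (((n : ℂ) + 1 + s) * τ + ((0 : ℚ) : ℂ))) = q ^ (n + 1) * w := by
    intro n
    rw [hq, hw, ← Complex.exp_nat_mul, ← Complex.exp_add]
    congr 1; push_cast; ring
  have e2 : ∀ n : ℕ, cexp (2 * π * Complex.I * (((n : ℂ) + 1 - s) * τ - ((0 : ℚ) : ℂ))) =
      q ^ (n + 1) * w⁻¹ := by
    intro n
    rw [hq, hw, ← Complex.exp_neg, ← Complex.exp_nat_mul, ← Complex.exp_add]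
    congr 1; push_cast; ring
  have e3 : cexp (2 * π * Complex.I * ((s : ℂ) * τ + ((0 : ℚ) : ℂ))) = w := by
    rw [hw]; congr 1; push_cast; ring
  unfold siegel
  simp only [e1, e2, e3]
  rw [mul_assoc, J]
  unfold KF th
  rw [show (s : ℂ) * τ + 0 + 1 / 2 + τ / 2 = s * τ + 1 / 2 - τ / 2 + τ by ring,
    jacobiTheta₂_add_left']
  generalize jacobiTheta₂ (s * τ + 1 / 2 - τ / 2) τ = JJ
  generalize (∏' n : ℕ, (1 - q ^ (n + 1)))⁻¹ = EE
  rw [show ∀ a b c d e : ℂ, -EE * a * (b * (c * (d * e))) = -(a * b * c * d) * (EE * e) by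
    intros; ring]
  simp only [← Complex.exp_add]
  rw [neg_mul, neg_mul, neg_mul, ← Complex.exp_add]
  congr 3
  push_cast
  ring

lemma hsmul5_coe (τ : ℍ) : ((hsmul 5 τ : ℍ) : ℂ) = 5 * τ := by
  simp [hsmul]

lemma gOne5_eq_RF (τ : ℍ) : gOne5 τ = RF (1 / 5) 0 (5 * τ) := by
  obtain ⟨c, hc, h⟩ := siegel_eq (hsmul 5 τ)
  unfold gOne5 RF
  rw [h, h, hsmul5_coe, ← div_eq_mul_inv, ← div_pow, mul_div_mul_left _ _ hc]
  congr 3 <;> · push_cast; norm_num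

/-! ### Modularity of `gOne5` -/

lemma hsmul5_smul (γ : SL(2, ℤ)) (c' : ℤ) (hc : γ 1 0 = 5 * c') : ∃ γ' : SL(2, ℤ),
    γ' 0 0 = γ 0 0 ∧ γ' 0 1 = 5 * γ 0 1 ∧ γ' 1 0 = c' ∧ γ' 1 1 = γ 1 1 ∧
    ∀ τ : ℍ, hsmul 5 (γ • τ) = γ' • hsmul 5 τ := by
  have hd := γ.det_coe
  rw [Matrix.det_fin_two] at hd
  obtain ⟨γ', h00, h01, h10, h11⟩ : ∃ γ' : SL(2, ℤ),
    γ' 0 0 = γ 0 0 ∧ γ' 0 1 = 5 * γ 0 1 ∧ γ' 1 0 = c' ∧ γ' 1 1 = γ 1 1 := by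
    refine ⟨⟨!![γ 0 0, 5 * γ 0 1; c', γ 1 1], ?_⟩, rfl, rfl, rfl, rfl⟩
    rw [Matrix.det_fin_two_of]
    linear_combination hd + γ 0 1 * hc
  refine ⟨γ', h00, h01, h10, h11, fun τ => ?_⟩
  · ext1
    rw [hsmul5_coe, UpperHalfPlane.coe_specialLinearGroup_apply,
      UpperHalfPlane.coe_specialLinearGroup_apply, hsmul5_coe]
    simp [hc, h00, h01, h10, h11]
    have : (5 * c' * τ + γ 1 1 : ℂ) ≠ 0 := by
      have := UpperHalfPlane.denom_ne_zero γ τ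
      rw [ModularGroup.denom_apply, hc] at this
      simpa using this
    have h2 : (c' * (5 * τ) + γ 1 1 : ℂ) ≠ 0 := by
      rwa [show (c' * (5 * τ) + γ 1 1 : ℂ) = (5 * c' * τ + γ 1 1 : ℂ) by ring]
    field_simp
    try ring

lemma exp_pi_int (n : ℤ) : cexp (π * Complex.I * n) = (-1) ^ n := by
  rw [mul_comm, Complex.exp_int_mul, Complex.exp_pi_mul_I]

lemma RF_add_right (a : ℤ) (y τ : ℂ) : RF (a / 5) (y + 1) τ = (-1) ^ (a + 1) * RF (a / 5) y τ := by
  unfold RF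
  rw [show 2 * (y + 1) = 2 * y + 1 + 1 by ring, KF_add_right, KF_add_right, KF_add_right]
  have h : (-cexp (π * Complex.I * (2 * (a / 5))) * -cexp (π * Complex.I * (2 * (a / 5))) /
      -cexp (π * Complex.I * (a / 5))) ^ 5 = (-1 : ℂ) ^ (a + 1) := by
    rw [neg_mul_neg, div_neg, ← Complex.exp_add, ← Complex.exp_sub, neg_pow, ← Complex.exp_nat_mul,
      ← exp_pi_int, show (-1 : ℂ) ^ 5 = -1 by norm_num, neg_one_mul, ← exp_pi_I_add,
      Complex.exp_eq_exp_iff_exists_int]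
    exact ⟨a, by push_cast; ring⟩
  rw [← h, ← mul_pow]
  congr 1
  ring

lemma RF_add_left (b : ℤ) (x τ : ℂ) : RF (x + 1) (b / 5) τ = (-1) ^ (b + 1) * RF x (b / 5) τ := by
  unfold RF
  rw [show 2 * (x + 1) = 2 * x + 1 + 1 by ring, KF_add_left, KF_add_left, KF_add_left]
  have h : (-cexp (-π * Complex.I * (2 * (b / 5))) * -cexp (-π * Complex.I * (2 * (b / 5))) /
      -cexp (-π * Complex.I * (b / 5))) ^ 5 = (-1 : ℂ) ^ (b + 1) := by
    rw [neg_mul_neg, div_neg, ← Complex.exp_add, ← Complex.exp_sub, neg_pow, ← Complex.exp_nat_mul,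
      ← exp_pi_int, show (-1 : ℂ) ^ 5 = -1 by norm_num, neg_one_mul, ← exp_pi_I_add,
      Complex.exp_eq_exp_iff_exists_int]
    exact ⟨-2 * b, by push_cast; ring⟩
  rw [← h, ← mul_pow]
  congr 1
  ring

lemma RF_int_right (a n : ℤ) (τ : ℂ) : RF (a / 5) n τ = (-1) ^ ((a + 1) * n) * RF (a / 5) 0 τ := by
  have h1 : (-1 : ℂ) ≠ 0 := by norm_num
  induction n using Int.induction_on with
  | zero => simp
  | succ k ih =>
    push_cast at ih ⊢
    rw [RF_add_right, ih, ← mul_assoc, ← zpow_add₀ h1]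
    congr 2; ring
  | pred k ih =>
    have := RF_add_right a ((-(k : ℤ) - 1 : ℤ) : ℂ) τ
    rw [show (((-(k : ℤ) - 1 : ℤ) : ℂ) + 1) = ((-(k : ℤ) : ℤ) : ℂ) by push_cast; ring, ih] at this
    have h2 : RF (a / 5) ((-(k : ℤ) - 1 : ℤ) : ℂ) τ = (-1) ^ (-(a + 1)) * ((-1) ^ (a + 1) *
        RF (a / 5) ((-(k : ℤ) - 1 : ℤ) : ℂ) τ) := by
      rw [← mul_assoc, ← zpow_add₀ h1]; simp
    rw [h2, ← this, ← mul_assoc, ← zpow_add₀ h1]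
    congr 2; ring

lemma RF_int_left (x τ : ℂ) (n : ℤ) : RF (x + n) 0 τ = (-1) ^ n * RF x 0 τ := by
  have h1 : (-1 : ℂ) ≠ 0 := by norm_num
  have h := fun x => RF_add_left 0 x τ
  simp only [Int.cast_zero, zero_div, zero_add, zpow_one] at h
  induction n using Int.induction_on with
  | zero => simp
  | succ k ih =>
    push_cast at ih ⊢
    rw [← add_assoc, h, ih, zpow_add₀ h1]
    simp
  | pred k ih =>
    have := h (x + ((-(k : ℤ) - 1 : ℤ) : ℂ))
    rw [show x + ((-(k : ℤ) - 1 : ℤ) : ℂ) + 1 = x + ((-(k : ℤ) : ℤ) : ℂ) by push_cast; ring, ih]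
      at this
    rw [show RF (x + ((-(k : ℤ) - 1 : ℤ) : ℂ)) 0 τ = -1 * (-1 * RF (x + ((-(k : ℤ) - 1 : ℤ) : ℂ)) 0 τ)
      by ring, ← this, zpow_sub₀ h1]
    simp
    ring

lemma gOne5_Gamma1 (γ : SL(2, ℤ)) (hγ : γ ∈ Gamma1 5) (τ : ℍ) : gOne5 (γ • τ) = gOne5 τ := by
  rw [Gamma1_mem] at hγ
  obtain ⟨ha, -, hc⟩ := hγ
  obtain ⟨c', hc'⟩ := (ZMod.intCast_zmod_eq_zero_iff_dvd _ 5).mp hc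
  obtain ⟨k, hk⟩ : ∃ k : ℤ, γ 0 0 = 1 + 5 * k := by
    have : ((γ 0 0 - 1 : ℤ) : ZMod 5) = 0 := by push_cast; rw [ha]; ring
    obtain ⟨k, hk⟩ := (ZMod.intCast_zmod_eq_zero_iff_dvd _ 5).mp this
    exact ⟨k, by push_cast at hk; linarith⟩
  obtain ⟨γ', h00, h01, h10, h11, h⟩ := hsmul5_smul γ c' (by exact_mod_cast hc')
  rw [gOne5_eq_RF, gOne5_eq_RF, ← hsmul5_coe, ← hsmul5_coe, h, RF_SL, h00, h01]
  have e1 : (γ 0 0 : ℂ) * (1 / 5) + (γ' 1 0 : ℂ) * 0 = ((γ 0 0 : ℤ) : ℂ) / 5 := by ring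
  have e2 : ((5 * γ 0 1 : ℤ) : ℂ) * (1 / 5) + (γ' 1 1 : ℂ) * 0 = ((γ 0 1 : ℤ) : ℂ) := by
    push_cast; ring
  rw [e1, e2, RF_int_right, hk]
  have e3 : ((1 + 5 * k : ℤ) : ℂ) / 5 = 1 / 5 + k := by push_cast; ring
  rw [e3, RF_int_left, ← mul_assoc, ← zpow_add₀ (by norm_num)]
  have hd := γ.det_coe
  rw [Matrix.det_fin_two, hc', hk] at hd
  have : Even ((1 + 5 * k + 1) * γ 0 1 + k) := by
    have h3 : ¬ Even ((1 + 5 * k) * γ 1 1 - γ 0 1 * (((5 : ℕ) : ℤ) * c')) := by rw [hd]; decide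
    push_cast at h3
    simp only [Int.even_add, Int.even_sub, Int.even_mul] at h3 ⊢
    have f1 : ¬ Even (1 : ℤ) := by decide
    have f5 : ¬ Even (5 : ℤ) := by decide
    tauto
  rw [this.neg_one_zpow, one_mul]

/-- representative of the cusp `2/5` -/
def gam2 : SL(2, ℤ) := ⟨!![2, 1; 5, 3], by simp [Matrix.det_fin_two_of]⟩

lemma gOne5_gam2 (τ : ℍ) : gOne5 (gam2 • τ) = -(gOne5 τ)⁻¹ := by
  obtain ⟨γ', h00, h01, h10, h11, h⟩ := hsmul5_smul gam2 1 (by simp [gam2])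
  rw [gOne5_eq_RF, gOne5_eq_RF, ← hsmul5_coe, ← hsmul5_coe, h, RF_SL, h00, h01]
  have e1 : (gam2 0 0 : ℂ) * (1 / 5) + (γ' 1 0 : ℂ) * 0 = ((2 : ℤ) : ℂ) / 5 := by
    simp [gam2]; ring
  have e2 : ((5 * gam2 0 1 : ℤ) : ℂ) * (1 / 5) + (γ' 1 1 : ℂ) * 0 = ((1 : ℤ) : ℂ) := by
    simp [gam2]
  rw [e1, e2, RF_int_right, show ((2 + 1) * 1 : ℤ) = 3 by norm_num,
    show (-1 : ℂ) ^ (3 : ℤ) = -1 by norm_num, neg_one_mul]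
  congr 1
  unfold RF
  rw [← inv_pow, inv_div]
  have k1 : ∀ t, KF (2 * (((2 : ℤ) : ℂ) / 5)) (2 * 0) t = KF (1 / 5) 0 t := by
    intro t
    rw [show 2 * (((2 : ℤ) : ℂ) / 5) = -(1 / 5) + 1 by push_cast; norm_num, KF_add_left]
    have := KF_neg (1 / 5) 0 t
    rw [neg_zero] at this
    rw [mul_zero, this]; simp
  have k2 : ((2 : ℤ) : ℂ) / 5 = 2 * (1 / 5) := by push_cast; ring
  rw [k1, k2, mul_zero]

/-- `τ / 5` as a point of the upper half plane -/
def div5 (τ : ℍ) : ℍ := ⟨(τ : ℂ) / 5, by simpa using div_pos τ.im_pos (by norm_num : (0:ℝ) < 5)⟩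

lemma div5_coe (τ : ℍ) : ((div5 τ : ℍ) : ℂ) = τ / 5 := rfl

lemma hsmul5_S (τ : ℍ) : hsmul 5 (ModularGroup.S • τ) = ModularGroup.S • div5 τ := by
  ext1
  rw [hsmul5_coe, UpperHalfPlane.modular_S_smul, UpperHalfPlane.modular_S_smul]
  simp [div5_coe]
  ring

lemma gOne5_S (τ : ℍ) : gOne5 (ModularGroup.S • τ) =
    (th (2 / 5) (τ / 5) / th (1 / 5) (τ / 5)) ^ 5 := by
  rw [gOne5_eq_RF, ← hsmul5_coe, hsmul5_S, RF_SL, ModularGroup.coe_S]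
  simp only [RF, KF]
  simp [div5_coe]
  rw [show (2 * 5⁻¹ : ℂ) = 2 / 5 by ring, show (5⁻¹ : ℂ) = 1 / 5 by ring, th_neg, th_neg,
    neg_div_neg_eq]

/-! ### Power series on the unit disc -/

/-- `F` is given by the power series `p` on the unit disc. -/
def CPS (p : PowerSeries ℂ) (F : ℂ → ℂ) : Prop :=
  ∀ q : ℂ, ‖q‖ < 1 → HasSum (fun n : ℕ => PowerSeries.coeff n p * q ^ n) (F q)

/-- `F` is given by a power series with rational coefficients on the unit disc. -/
def RatPS (F : ℂ → ℂ) : Prop :=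
  ∃ p : PowerSeries ℚ, CPS (p.map (algebraMap ℚ ℂ)) F

lemma CPS.add {p p' F G} (h : CPS p F) (h' : CPS p' G) : CPS (p + p') (fun q => F q + G q) := by
  intro q hq
  refine ((h q hq).add (h' q hq)).congr_fun fun n => ?_
  rw [map_add]; ring

lemma CPS.mul {p p' F G} (h : CPS p F) (h' : CPS p' G) : CPS (p * p') (fun q => F q * G q) := by
  intro q hq
  have h1 := (h q hq).summable.norm
  have h2 := (h' q hq).summable.norm
  have h3 := tsum_mul_tsum_eq_tsum_sum_antidiagonal_of_summable_norm h1 h2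
  have h4 := (summable_norm_sum_mul_antidiagonal_of_summable_norm h1 h2).of_norm.hasSum
  rw [← h3, (h q hq).tsum_eq, (h' q hq).tsum_eq] at h4
  refine h4.congr_fun fun n => ?_
  rw [PowerSeries.coeff_mul, Finset.sum_mul]
  refine Finset.sum_congr rfl fun x hx => ?_
  rw [Finset.HasAntidiagonal.mem_antidiagonal] at hx
  rw [← hx, pow_add]; ring

lemma CPS.const (c : ℂ) : CPS (PowerSeries.C c) (fun _ => c) := by
  intro q hq
  have := hasSum_single (f := fun n : ℕ => PowerSeries.coeff n (PowerSeries.C c) * q ^ n) 0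
    (fun n hn => by simp [PowerSeries.coeff_C, hn])
  simpa [PowerSeries.coeff_C] using this

lemma CPS.X : CPS PowerSeries.X (fun q => q) := by
  intro q hq
  have := hasSum_single (f := fun n : ℕ => PowerSeries.coeff n (PowerSeries.X : PowerSeries ℂ) * q ^ n) 1
    (fun n hn => by simp [PowerSeries.coeff_X, hn])
  simpa [PowerSeries.coeff_X] using this

lemma CPS.hasFPS {p F} (h : CPS p F) : HasFPowerSeriesOnBall F
    (FormalMultilinearSeries.ofScalars ℂ (fun n => PowerSeries.coeff n p)) 0 1 := by
  refine ⟨?_, by simp, fun {y} hy => ?_⟩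
  · refine ENNReal.le_of_forall_nnreal_lt fun r hr => ?_
    refine FormalMultilinearSeries.le_radius_of_summable _ ?_
    have hr' : ‖((r : ℝ) : ℂ)‖ < 1 := by simpa using hr
    refine ((h _ hr').summable.norm).congr fun n => ?_
    rw [FormalMultilinearSeries.ofScalars_norm]
    simp
  · have hy' : ‖y‖ < 1 := by
      rw [Metric.mem_eball, edist_zero_right] at hy
      rw [← ENNReal.ofReal_lt_one, ofReal_norm]; exact hy
    rw [zero_add]
    refine (h y hy').congr_fun fun n => ?_
    rw [FormalMultilinearSeries.ofScalars_apply_eq, smul_eq_mul]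

lemma CPS.unique {p p' F} (h : CPS p F) (h' : CPS p' F) : p = p' := by
  have := h.hasFPS.hasFPowerSeriesAt.eq_formalMultilinearSeries h'.hasFPS.hasFPowerSeriesAt
  ext n
  exact congrFun (FormalMultilinearSeries.ofScalars_series_injective ℂ ℂ this) n

lemma CPS.differentiableOn {p F} (h : CPS p F) : DifferentiableOn ℂ F (Metric.ball 0 1) := by
  have := h.hasFPS.differentiableOn
  rwa [← Metric.eball_ofReal, ENNReal.ofReal_one]

lemma CPS.congr {p F G} (h : CPS p F) (hF : ∀ q, ‖q‖ < 1 → G q = F q) : CPS p G := by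
  intro q hq
  rw [hF q hq]; exact h q hq

lemma CPS.at_zero {p F} (h : CPS p F) : F 0 = PowerSeries.coeff 0 p := by
  have h1 := h 0 (by simp)
  have := hasSum_single (f := fun n : ℕ => PowerSeries.coeff n p * (0:ℂ) ^ n) 0
    (fun n hn => by simp [hn])
  rw [h1.unique this]; simp

lemma exists_CPS {F : ℂ → ℂ} (hF : DifferentiableOn ℂ F (Metric.ball 0 1)) : ∃ p, CPS p F := by
  refine ⟨PowerSeries.mk fun n => (n.factorial : ℂ)⁻¹ * iteratedDeriv n F 0, fun q hq => ?_⟩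
  have := Complex.hasSum_taylorSeries_on_ball (c := 0) (r := 1) (z := q) hF (by simpa using hq)
  refine this.congr_fun fun n => ?_
  simp
  ring

namespace RatPS

lemma const (c : ℚ) : RatPS (fun _ => (c : ℂ)) := ⟨PowerSeries.C c, by simpa using CPS.const (c : ℂ)⟩

lemma X : RatPS (fun q => q) := ⟨PowerSeries.X, by simpa using CPS.X⟩

variable {F G : ℂ → ℂ}

lemma add (h : RatPS F) (h' : RatPS G) : RatPS (fun q => F q + G q) := by
  obtain ⟨p, hp⟩ := h
  obtain ⟨p', hp'⟩ := h'
  exact ⟨p + p', by simpa using hp.add hp'⟩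

lemma mul (h : RatPS F) (h' : RatPS G) : RatPS (fun q => F q * G q) := by
  obtain ⟨p, hp⟩ := h
  obtain ⟨p', hp'⟩ := h'
  exact ⟨p * p', by simpa using hp.mul hp'⟩

lemma congr (h : RatPS F) (hF : ∀ q, ‖q‖ < 1 → G q = F q) : RatPS G := by
  obtain ⟨p, hp⟩ := h
  exact ⟨p, hp.congr hF⟩

lemma sub (h : RatPS F) (h' : RatPS G) : RatPS (fun q => F q - G q) :=
  (h.add ((const (-1)).mul h')).congr fun q _ => by push_cast; ring

lemma pow (h : RatPS F) (n : ℕ) : RatPS (fun q => F q ^ n) := by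
  induction n with
  | zero => simpa using const 1
  | succ n ih => simpa only [pow_succ] using ih.mul h

lemma differentiableOn (h : RatPS F) : DifferentiableOn ℂ F (Metric.ball 0 1) := by
  obtain ⟨p, hp⟩ := h
  exact hp.differentiableOn

lemma at_zero (h : RatPS F) : ∃ c : ℚ, F 0 = c := by
  obtain ⟨p, hp⟩ := h
  exact ⟨_, by rw [hp.at_zero, PowerSeries.coeff_map]; rfl⟩

lemma inv (h : RatPS F) (h0 : ∀ q, ‖q‖ < 1 → F q ≠ 0) : RatPS (fun q => (F q)⁻¹) := by
  have hd : DifferentiableOn ℂ (fun q => (F q)⁻¹) (Metric.ball 0 1) :=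
    h.differentiableOn.inv fun q hq => h0 q (by simpa using hq)
  obtain ⟨p, hp⟩ := h
  obtain ⟨d, hdd⟩ := exists_CPS hd
  have h1 := (hp.mul hdd).congr (G := fun _ => (1 : ℂ)) fun q hq => (mul_inv_cancel₀ (h0 q hq)).symm
  have h2 := h1.unique (CPS.const 1)
  have hp0 : PowerSeries.constantCoeff p ≠ 0 := by
    intro h3
    apply h0 0 (by simp)
    rw [hp.at_zero, PowerSeries.coeff_map, PowerSeries.coeff_zero_eq_constantCoeff_apply, h3]
    simp
  refine ⟨p⁻¹, ?_⟩
  have h3 : d = (p⁻¹).map (algebraMap ℚ ℂ) := by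
    have h4 : p.map (algebraMap ℚ ℂ) * (p⁻¹).map (algebraMap ℚ ℂ) = 1 := by
      rw [← map_mul, PowerSeries.mul_inv_cancel _ hp0, map_one]
    have h5 : d * p.map (algebraMap ℚ ℂ) = 1 := by rw [mul_comm, h2]; simp
    calc d = d * (p.map (algebraMap ℚ ℂ) * (p⁻¹).map (algebraMap ℚ ℂ)) := by rw [h4, mul_one]
      _ = _ := by rw [← mul_assoc, h5, one_mul]
  rw [← h3]; exact hdd

lemma divX (h : RatPS F) (h0 : F 0 = 0) : ∃ G, RatPS G ∧ ∀ q, ‖q‖ < 1 → F q = q * G q := by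
  obtain ⟨p, hp⟩ := h
  have hp0 : PowerSeries.coeff 0 p = 0 := by
    have := hp.at_zero
    rw [h0, PowerSeries.coeff_map] at this
    simpa using this.symm
  refine ⟨fun q => if q = 0 then ((PowerSeries.coeff 1 p : ℚ) : ℂ) else F q / q,
    ⟨PowerSeries.mk fun n => PowerSeries.coeff (n + 1) p, fun q hq => ?_⟩, fun q hq => ?_⟩
  · by_cases hq0 : q = 0
    · subst hq0
      have := hasSum_single (f := fun n : ℕ => PowerSeries.coeff n (PowerSeries.map (algebraMap ℚ ℂ)
        (PowerSeries.mk fun n => PowerSeries.coeff (n + 1) p)) * (0:ℂ) ^ n) 0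
        (fun n hn => by simp [hn])
      simpa using this
    · have h1 := (hasSum_nat_add_iff' (f := fun n : ℕ => PowerSeries.coeff n (p.map (algebraMap ℚ ℂ)) * q ^ n) 1).mpr (hp q hq)
      simp only [hq0, if_false]
      have h2 := h1.mul_right q⁻¹
      simp [hp0, -PowerSeries.coeff_zero_eq_constantCoeff] at h2
      rw [div_eq_mul_inv]
      refine h2.congr_fun fun n => ?_
      simp
      field_simp
      ring
  · by_cases hq0 : q = 0
    · simp [hq0, h0]
    · simp only [hq0, if_false]; field_simp

end RatPS

/-! ### The expansion of `gOne5` at infinity -/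

/-- exponents of the theta series -/
def eZ (i n : ℤ) : ℤ := 5 * (n * (n - 1) / 2) + i * n

lemma two_eZ (i n : ℤ) : 2 * eZ i n = 5 * (n * (n - 1)) + 2 * i * n := by
  have h : 2 * (n * (n - 1) / 2) = n * (n - 1) :=
    Int.mul_ediv_cancel' (even_iff_two_dvd.mp (by
      have := Int.even_mul_succ_self (n - 1)
      rwa [sub_add_cancel, mul_comm] at this))
  unfold eZ
  linear_combination 5 * h

lemma eZ_nonneg {i : ℤ} (hi : i = 1 ∨ i = 2) (n : ℤ) : 0 ≤ eZ i n := by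
  have h := two_eZ i n
  rcases le_or_gt n 0 with hn | hn
  · rcases hi with rfl | rfl <;> nlinarith
  · rcases hi with rfl | rfl <;> nlinarith

lemma eZ_injective {i : ℤ} (hi : i = 1 ∨ i = 2) : Function.Injective fun n => (eZ i n).toNat := by
  intro m n h
  have h1 : eZ i m = eZ i n := by
    have := congrArg (fun k : ℕ => (k : ℤ)) h
    simpa [Int.toNat_of_nonneg (eZ_nonneg hi _)] using this
  have hm := two_eZ i m
  have hn := two_eZ i n
  have h2 : (m - n) * (5 * (m + n) - 5 + 2 * i) = 0 := by
    linear_combination 2 * h1 - hm + hn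
  rcases mul_eq_zero.mp h2 with h3 | h3
  · omega
  · omega

/-- the theta series -/
def Ath (i : ℤ) (q : ℂ) : ℂ := ∑' n : ℤ, (-1) ^ n * q ^ (eZ i n).toNat

lemma summable_Ath {i : ℤ} (hi : i = 1 ∨ i = 2) {q : ℂ} (hq : ‖q‖ < 1) :
    Summable fun n : ℤ => (-1 : ℂ) ^ n * q ^ (eZ i n).toNat := by
  refine Summable.of_norm ?_
  have := (summable_geometric_of_lt_one (norm_nonneg q) hq).comp_injective (eZ_injective hi)
  refine this.congr fun n => ?_
  simp

lemma RatPS_Ath {i : ℤ} (hi : i = 1 ∨ i = 2) : RatPS (Ath i) := by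
  refine ⟨PowerSeries.mk (Function.extend (fun n => (eZ i n).toNat) (fun n : ℤ => (-1 : ℚ) ^ n) 0),
    fun q hq => ?_⟩
  have h := (hasSum_extend_zero (eZ_injective hi)).mpr (summable_Ath hi hq).hasSum
  refine h.congr_fun fun k => ?_
  rw [PowerSeries.coeff_map, PowerSeries.coeff_mk]
  by_cases hk : ∃ n, (eZ i n).toNat = k
  · obtain ⟨n, rfl⟩ := hk
    rw [(eZ_injective hi).extend_apply (fun n : ℤ => (-1 : ℚ) ^ n) 0 n,
      (eZ_injective hi).extend_apply (fun n : ℤ => (-1 : ℂ) ^ n * q ^ (eZ i n).toNat) 0 n]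
    simp
  · rw [Function.extend_apply' _ _ _ hk, Function.extend_apply' _ _ _ hk]
    simp

lemma Ath_zero {i : ℤ} (hi : i = 1 ∨ i = 2) : Ath i 0 = 1 := by
  unfold Ath
  rw [tsum_eq_single 0]
  · simp [eZ]
  · intro n hn
    have : (eZ i n).toNat ≠ 0 := fun h => hn (eZ_injective hi (by simpa [eZ] using h))
    simp [this]

/-- the nome -/
def Q (τ : ℂ) : ℂ := cexp (2 * π * Complex.I * τ)

lemma norm_Q_lt (τ : ℍ) : ‖Q τ‖ < 1 := UpperHalfPlane.norm_exp_two_pi_I_lt_one τ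

lemma Q_ne (τ : ℂ) : Q τ ≠ 0 := Complex.exp_ne_zero _

lemma Ath_Q {i : ℤ} (hi : i = 1 ∨ i = 2) (τ : ℍ) :
    Ath i (Q τ) = jacobiTheta₂ (i * τ + 1 / 2 - 5 * τ / 2) (5 * τ) := by
  unfold Ath jacobiTheta₂
  refine tsum_congr fun n => ?_
  rw [Q, ← Complex.exp_nat_mul, ← exp_pi_int, ← Complex.exp_add, jacobiTheta₂_term]
  congr 1
  have h1 : (((eZ i n).toNat : ℕ) : ℂ) = ((eZ i n : ℤ) : ℂ) := by
    have := Int.toNat_of_nonneg (eZ_nonneg hi n)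
    exact_mod_cast this
  have h2 : (2 * (eZ i n : ℤ) : ℂ) = 5 * (n * (n - 1)) + 2 * i * n := by
    exact_mod_cast two_eZ i n
  rw [h1]
  linear_combination (π * Complex.I * τ) * h2

lemma KF_eq_Ath {i : ℤ} (hi : i = 1 ∨ i = 2) (τ : ℍ) :
    KF (i / 5) 0 (5 * τ) = cexp (π * Complex.I * (5 * τ / 4 - 1 / 2)) *
      cexp (π * Complex.I * ((i / 5) ^ 2 - i / 5) * (5 * τ)) * Ath i (Q τ) := by
  rw [Ath_Q hi]
  unfold KF th
  rw [show (i / 5 : ℂ) * (5 * τ) + 0 + 1 / 2 + 5 * τ / 2 = i * τ + 1 / 2 - 5 * τ / 2 + 5 * τ by ring,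
    jacobiTheta₂_add_left', ← mul_assoc, ← mul_assoc, ← Complex.exp_add, ← Complex.exp_add,
    ← Complex.exp_add]
  congr 2
  ring

/-- `gOne5 = Q⁻¹ * AA Q` -/
def AA (q : ℂ) : ℂ := (Ath 2 q * (Ath 1 q)⁻¹) ^ 5

lemma gOne5_eq_AA (τ : ℍ) : gOne5 τ = (Q τ)⁻¹ * AA (Q τ) := by
  rw [gOne5_eq_RF, RF]
  have h1 := KF_eq_Ath (i := 1) (Or.inl rfl) τ
  have h2 := KF_eq_Ath (i := 2) (Or.inr rfl) τ
  rw [mul_zero, show (2 * (1 / 5) : ℂ) = ((2 : ℤ) : ℂ) / 5 by push_cast; ring,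
    show (1 / 5 : ℂ) = ((1 : ℤ) : ℂ) / 5 by push_cast; ring, h1, h2, AA,
    mul_assoc (cexp (π * Complex.I * (5 * τ / 4 - 1 / 2))),
    mul_assoc (cexp (π * Complex.I * (5 * τ / 4 - 1 / 2))), mul_div_mul_left _ _ (Complex.exp_ne_zero _), mul_div_mul_comm, mul_pow, ← Complex.exp_sub,
    ← Complex.exp_nat_mul, Q, ← Complex.exp_neg, div_eq_mul_inv (Ath 2 _)]
  congr 2
  push_cast
  ring

lemma tprod_ne_zero_aux {q w : ℂ} (hq : ‖q‖ < 1) (hw : ‖q * w‖ < 1) :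
    ∏' n : ℕ, (1 - q ^ (n + 1) * w) ≠ 0 := by
  have h := tprod_one_add_ne_zero_of_summable (f := fun n : ℕ => -(q ^ (n + 1) * w)) (fun n => ?_) ?_
  · simpa [sub_eq_add_neg] using h
  · intro h
    have h1 : q ^ (n + 1) * w = 1 := by linear_combination -h
    have h2 : ‖q ^ (n + 1) * w‖ < 1 := by
      rw [pow_succ, mul_assoc, norm_mul, norm_pow]
      calc ‖q‖ ^ n * ‖q * w‖ ≤ 1 * ‖q * w‖ := by
            gcongr; exact pow_le_one₀ (norm_nonneg _) hq.le
        _ < 1 := by simpa using hw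
    rw [h1] at h2; simp at h2
  · simp only [norm_neg, norm_mul, norm_pow]
    refine Summable.mul_right _ ?_
    exact (summable_nat_add_iff 1).mpr (summable_geometric_of_lt_one (norm_nonneg q) hq)

lemma Ath_ne_zero {i : ℤ} (hi : i = 1 ∨ i = 2) {q : ℂ} (hq : ‖q‖ < 1) : Ath i q ≠ 0 := by
  by_cases hq0 : q = 0
  · rw [hq0, Ath_zero hi]; exact one_ne_zero
  have hi0 : 0 < i := by omega
  obtain ⟨k, rfl⟩ : ∃ k : ℕ, i = k := ⟨i.toNat, by omega⟩
  have hq5 : ‖q ^ 5‖ < 1 := by rw [norm_pow]; exact pow_lt_one₀ (norm_nonneg _) hq (by norm_num)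
  have hterm : ∀ n : ℤ, q ^ (5 * (n * (n - 1) / 2)) * (-(q ^ k)) ^ n =
      (-1 : ℂ) ^ n * q ^ (eZ k n).toNat := by
    intro n
    rw [← zpow_natCast q (eZ k n).toNat, Int.toNat_of_nonneg (eZ_nonneg hi n), eZ,
      neg_eq_neg_one_mul, mul_zpow, zpow_add₀ hq0, zpow_mul q k n, zpow_natCast]
    ring
  have J := jacobi_triple hq5 (pow_ne_zero 5 hq0) (pow_ne_zero k hq0)
    (fun n : ℤ => q ^ (5 * (n * (n - 1) / 2))) (by simp) (fun n => by
      rw [← zpow_natCast q 5, ← _root_.zpow_mul, ← zpow_add₀ hq0]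
      congr 1
      have h1 := two_eZ 0 n
      have h2 := two_eZ 0 (n + 1)
      unfold eZ at h1 h2
      push_cast
      linarith) (by simp_rw [hterm]; exact summable_Ath hi hq)
  simp_rw [hterm] at J
  intro h0
  rw [show (∑' n : ℤ, (-1 : ℂ) ^ n * q ^ (eZ k n).toNat) = Ath k q from rfl, h0, mul_zero] at J
  have hk : k = 1 ∨ k = 2 := by omega
  have hw1 : ‖q ^ k‖ < 1 := by
    rw [norm_pow]; exact pow_lt_one₀ (norm_nonneg _) hq (by omega)
  have hw2 : ‖q ^ 5 * (q ^ k)⁻¹‖ < 1 := by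
    have : q ^ 5 * (q ^ k)⁻¹ = q ^ (5 - k) := by
      rw [pow_sub₀ _ hq0 (by omega)]
    rw [this, norm_pow]; exact pow_lt_one₀ (norm_nonneg _) hq (by omega)
  have hw3 : ‖q ^ 5 * q ^ k‖ < 1 := by
    rw [← pow_add, norm_pow]; exact pow_lt_one₀ (norm_nonneg _) hq (by omega)
  rcases mul_eq_zero.mp J with h | h
  · rw [← sub_eq_zero.mp h] at hw1; simp at hw1
  · rw [Multipliable.tprod_mul (multipliable_pow_succ hq5 _) (multipliable_pow_succ hq5 _)] at h
    rcases mul_eq_zero.mp h with h | h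
    · exact tprod_ne_zero_aux hq5 hw3 h
    · exact tprod_ne_zero_aux hq5 hw2 h

lemma RatPS_AA : RatPS AA :=
  ((RatPS_Ath (Or.inr rfl)).mul ((RatPS_Ath (Or.inl rfl)).inv
    fun _ hq => Ath_ne_zero (Or.inl rfl) hq)).pow 5

lemma AA_ne_zero {q : ℂ} (hq : ‖q‖ < 1) : AA q ≠ 0 :=
  pow_ne_zero _ (mul_ne_zero (Ath_ne_zero (Or.inr rfl) hq) (inv_ne_zero (Ath_ne_zero (Or.inl rfl) hq)))

lemma AA_zero : AA 0 = 1 := by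
  rw [AA, Ath_zero (Or.inr rfl), Ath_zero (Or.inl rfl)]; simp

lemma gOne5_ne_zero (τ : ℍ) : gOne5 τ ≠ 0 := by
  rw [gOne5_eq_AA]
  exact mul_ne_zero (inv_ne_zero (Q_ne _)) (AA_ne_zero (norm_Q_lt τ))

lemma mdiff_Q : MDifferentiable 𝓘(ℂ) 𝓘(ℂ) (fun τ : ℍ => Q τ) := by
  rw [UpperHalfPlane.mdifferentiable_iff]
  have : DifferentiableOn ℂ Q {z : ℂ | 0 < z.im} := by unfold Q; fun_prop
  refine this.congr fun z hz => ?_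
  simp [UpperHalfPlane.ofComplex_apply_of_im_pos hz]

lemma mdiff_comp_Q {F : ℂ → ℂ} (hF : DifferentiableOn ℂ F (Metric.ball 0 1)) :
    MDifferentiable 𝓘(ℂ) 𝓘(ℂ) (fun τ : ℍ => F (Q τ)) := by
  rw [UpperHalfPlane.mdifferentiable_iff]
  have : DifferentiableOn ℂ (fun z => F (Q z)) {z : ℂ | 0 < z.im} := by
    refine hF.comp (t := Metric.ball 0 1) (f := Q) (by unfold Q; fun_prop) fun z hz => ?_
    simpa using norm_Q_lt ⟨z, hz⟩
  refine this.congr fun z hz => ?_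
  simp [UpperHalfPlane.ofComplex_apply_of_im_pos hz]

lemma mdiff_inv {f : ℍ → ℂ} (hf : MDifferentiable 𝓘(ℂ) 𝓘(ℂ) f) (h0 : ∀ τ, f τ ≠ 0) :
    MDifferentiable 𝓘(ℂ) 𝓘(ℂ) (fun τ => (f τ)⁻¹) := by
  rw [UpperHalfPlane.mdifferentiable_iff] at hf ⊢
  exact hf.inv fun z _ => h0 _

lemma mdiff_gOne5 : MDifferentiable 𝓘(ℂ) 𝓘(ℂ) gOne5 := by
  have h := (mdiff_inv mdiff_Q fun τ => Q_ne τ).mul (mdiff_comp_Q RatPS_AA.differentiableOn)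
  have e : gOne5 = fun τ : ℍ => (Q τ)⁻¹ * AA (Q τ) := funext gOne5_eq_AA
  rw [e]; exact h

/-! ### Cusps -/

lemma SL_mul_entry (A B : SL(2, ℤ)) (i j : Fin 2) :
    (A * B) i j = A i 0 * B 0 j + A i 1 * B 1 j := by
  rw [Matrix.SpecialLinearGroup.coe_mul, Matrix.mul_apply, Fin.sum_univ_two]

lemma SL_inv_entries (A : SL(2, ℤ)) : (A⁻¹) 0 0 = A 1 1 ∧ (A⁻¹) 0 1 = -A 0 1 ∧
    (A⁻¹) 1 0 = -A 1 0 ∧ (A⁻¹) 1 1 = A 0 0 := by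
  rw [SpecialLinearGroup.SL2_inv_expl]
  exact ⟨rfl, rfl, rfl, rfl⟩

lemma T_zpow_entries (k : ℤ) : (ModularGroup.T ^ k) 0 0 = 1 ∧ (ModularGroup.T ^ k) 0 1 = k ∧
    (ModularGroup.T ^ k) 1 0 = 0 ∧ (ModularGroup.T ^ k) 1 1 = 1 := by
  rw [ModularGroup.coe_T_zpow]
  exact ⟨rfl, rfl, rfl, rfl⟩

lemma S_entries : ModularGroup.S 0 0 = 0 ∧ ModularGroup.S 0 1 = -1 ∧
    ModularGroup.S 1 0 = 1 ∧ ModularGroup.S 1 1 = 0 := by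
  rw [ModularGroup.coe_S]
  exact ⟨rfl, rfl, rfl, rfl⟩

lemma gam2_entries : gam2 0 0 = 2 ∧ gam2 0 1 = 1 ∧ gam2 1 0 = 5 ∧ gam2 1 1 = 3 :=
  ⟨rfl, rfl, rfl, rfl⟩

lemma mul_inv_mem_Gamma1 (γ ρ : SL(2, ℤ)) (h0 : ((γ 1 0 : ℤ) : ZMod 5) = ((ρ 1 0 : ℤ) : ZMod 5))
    (h1 : ((γ 1 1 : ℤ) : ZMod 5) = ((ρ 1 1 : ℤ) : ZMod 5)) : γ * ρ⁻¹ ∈ Gamma1 5 := by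
  rw [Gamma1_mem]
  have hγ := γ.det_coe
  have hρ := ρ.det_coe
  rw [Matrix.det_fin_two] at hγ hρ
  have hγ' := congrArg (fun n : ℤ => (n : ZMod 5)) hγ
  have hρ' := congrArg (fun n : ℤ => (n : ZMod 5)) hρ
  push_cast at hγ' hρ'
  obtain ⟨i1, i2, i3, i4⟩ := SL_inv_entries ρ
  rw [SL_mul_entry, SL_mul_entry, SL_mul_entry, i1, i2, i3, i4]
  push_cast
  rw [← h0, ← h1] at *
  refine ⟨?_, ?_, ?_⟩
  · linear_combination hγ'
  · linear_combination hρ'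
  · ring

lemma coset_lemma (γ : SL(2, ℤ)) : ∃ γ' ∈ Gamma1 5, ∃ δ : SL(2, ℤ), ∃ k : ℤ,
    (δ = 1 ∨ δ = gam2 ∨ δ = ModularGroup.S ∨ δ = gam2 * ModularGroup.S) ∧
    ∀ τ : ℍ, γ • τ = γ' • δ • (ModularGroup.T ^ k • τ) := by
  have key : ∀ (ε : SL(2, ℤ)) (δ : SL(2, ℤ)) (k : ℤ), (∀ τ : ℍ, ε • τ = γ • τ) →
      (δ = 1 ∨ δ = gam2 ∨ δ = ModularGroup.S ∨ δ = gam2 * ModularGroup.S) →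
      ((ε 1 0 : ℤ) : ZMod 5) = (((δ * ModularGroup.T ^ k) 1 0 : ℤ) : ZMod 5) →
      ((ε 1 1 : ℤ) : ZMod 5) = (((δ * ModularGroup.T ^ k) 1 1 : ℤ) : ZMod 5) →
      ∃ γ' ∈ Gamma1 5, ∃ δ : SL(2, ℤ), ∃ k : ℤ,
        (δ = 1 ∨ δ = gam2 ∨ δ = ModularGroup.S ∨ δ = gam2 * ModularGroup.S) ∧
        ∀ τ : ℍ, γ • τ = γ' • δ • (ModularGroup.T ^ k • τ) := by
    intro ε δ k hε hδ h0 h1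
    refine ⟨_, mul_inv_mem_Gamma1 _ _ h0 h1, δ, k, hδ, fun τ => ?_⟩
    rw [← hε, smul_smul, smul_smul]
    congr 1
    group
  have hneg : ∀ τ : ℍ, (-γ) • τ = γ • τ := fun τ => by rw [ModularGroup.SL_neg_smul]
  have hn0 : (-γ) 1 0 = -γ 1 0 := by simp
  have hn1 : (-γ) 1 1 = -γ 1 1 := by simp
  have hdet := γ.det_coe
  rw [Matrix.det_fin_two] at hdet
  have hdet' := congrArg (fun n : ℤ => (n : ZMod 5)) hdet
  push_cast at hdet'
  have b1 : ∀ k : ℤ, (1 * ModularGroup.T ^ k : SL(2, ℤ)) 1 0 = 0 ∧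
      (1 * ModularGroup.T ^ k : SL(2, ℤ)) 1 1 = 1 := fun k => by
    simp [ModularGroup.coe_T_zpow, -map_zpow]
  have b2 : ∀ k : ℤ, (gam2 * ModularGroup.T ^ k : SL(2, ℤ)) 1 0 = 5 ∧
      (gam2 * ModularGroup.T ^ k : SL(2, ℤ)) 1 1 = 5 * k + 3 := fun k => by
    obtain ⟨t1, t2, t3, t4⟩ := T_zpow_entries k
    obtain ⟨g1, g2, g3, g4⟩ := gam2_entries
    rw [SL_mul_entry, SL_mul_entry, t1, t2, t3, t4, g3, g4]
    constructor <;> ring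
  have b3 : ∀ k : ℤ, (ModularGroup.S * ModularGroup.T ^ k : SL(2, ℤ)) 1 0 = 1 ∧
      (ModularGroup.S * ModularGroup.T ^ k : SL(2, ℤ)) 1 1 = k := fun k => by
    simp [ModularGroup.coe_T_zpow, -map_zpow, ModularGroup.coe_S]
  have b4 : ∀ k : ℤ, (gam2 * ModularGroup.S * ModularGroup.T ^ k : SL(2, ℤ)) 1 0 = 3 ∧
      (gam2 * ModularGroup.S * ModularGroup.T ^ k : SL(2, ℤ)) 1 1 = 3 * k - 5 := fun k => by
    obtain ⟨t1, t2, t3, t4⟩ := T_zpow_entries k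
    obtain ⟨g1, g2, g3, g4⟩ := gam2_entries
    obtain ⟨s1, s2, s3, s4⟩ := S_entries
    simp only [SL_mul_entry, t1, t2, t3, t4, g3, g4, s1, s2, s3, s4]
    constructor <;> ring
  have f5 : (5 : ZMod 5) = 0 := by decide
  obtain hc | hc | hc | hc | hc : ((γ 1 0 : ℤ) : ZMod 5) = 0 ∨ ((γ 1 0 : ℤ) : ZMod 5) = 1 ∨
      ((γ 1 0 : ℤ) : ZMod 5) = -1 ∨ ((γ 1 0 : ℤ) : ZMod 5) = 3 ∨ ((γ 1 0 : ℤ) : ZMod 5) = -3 := by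
    generalize ((γ 1 0 : ℤ) : ZMod 5) = c
    revert c; decide
  · rw [hc, mul_zero, sub_zero] at hdet'
    obtain hd | hd | hd | hd | hd : ((γ 1 1 : ℤ) : ZMod 5) = 0 ∨ ((γ 1 1 : ℤ) : ZMod 5) = 1 ∨
      ((γ 1 1 : ℤ) : ZMod 5) = -1 ∨ ((γ 1 1 : ℤ) : ZMod 5) = 3 ∨ ((γ 1 1 : ℤ) : ZMod 5) = -3 := by
      generalize ((γ 1 1 : ℤ) : ZMod 5) = c
      revert c; decide
    · rw [hd, mul_zero] at hdet'
      exact absurd hdet' (by decide)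
    · refine key γ 1 0 (fun _ => rfl) (Or.inl rfl) ?_ ?_
      · rw [(b1 0).1, hc]; simp
      · rw [(b1 0).2, hd]; simp
    · refine key (-γ) 1 0 hneg (Or.inl rfl) ?_ ?_
      · rw [(b1 0).1, hn0]; push_cast; rw [hc]; simp
      · rw [(b1 0).2, hn1]; push_cast; rw [hd]; simp
    · refine key γ gam2 0 (fun _ => rfl) (Or.inr (Or.inl rfl)) ?_ ?_
      · rw [(b2 0).1, hc]; push_cast; rw [f5]
      · rw [(b2 0).2, hd]; simp
    · refine key (-γ) gam2 0 hneg (Or.inr (Or.inl rfl)) ?_ ?_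
      · rw [(b2 0).1, hn0]; push_cast; rw [hc, f5]; simp
      · rw [(b2 0).2, hn1]; push_cast; rw [hd]; simp
  · refine key γ _ (γ 1 1) (fun _ => rfl) (Or.inr (Or.inr (Or.inl rfl))) ?_ ?_
    · rw [(b3 _).1, hc]; simp
    · rw [(b3 _).2]
  · refine key (-γ) _ (-γ 1 1) hneg (Or.inr (Or.inr (Or.inl rfl))) ?_ ?_
    · rw [(b3 _).1, hn0]; push_cast; rw [hc]; simp
    · rw [(b3 _).2, hn1]
  · refine key γ _ (2 * γ 1 1) (fun _ => rfl) (Or.inr (Or.inr (Or.inr rfl))) ?_ ?_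
    · rw [(b4 _).1, hc]; simp
    · rw [(b4 _).2]; push_cast; linear_combination (1 - ((γ 1 1 : ℤ) : ZMod 5)) * f5
  · refine key (-γ) _ (-(2 * γ 1 1)) hneg (Or.inr (Or.inr (Or.inr rfl))) ?_ ?_
    · rw [(b4 _).1, hn0]; push_cast; rw [hc]; simp
    · rw [(b4 _).2, hn1]; push_cast; linear_combination (1 + ((γ 1 1 : ℤ) : ZMod 5)) * f5

lemma tendsto_T_zpow (k : ℤ) :
    Filter.Tendsto (fun τ : ℍ => ModularGroup.T ^ k • τ) atImInfty atImInfty := by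
  rw [atImInfty, Filter.tendsto_comap_iff]
  refine Filter.tendsto_comap.congr fun τ => ?_
  simp only [Function.comp]
  rw [ModularGroup.im_T_zpow_smul]

/-- the four conditions at the cusps imply the condition at all cusps -/
lemma cusp_isBigO {f : ℍ → ℂ} {e : ℍ → ℝ} (he : ∀ (k : ℤ) (τ : ℍ), e (ModularGroup.T ^ k • τ) = e τ)
    (hf : ∀ γ ∈ Gamma1 5, ∀ τ : ℍ, f (γ • τ) = f τ)
    (h1 : f =O[atImInfty] e) (h2 : (fun τ => f (gam2 • τ)) =O[atImInfty] e)
    (h3 : (fun τ => f (ModularGroup.S • τ)) =O[atImInfty] e)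
    (h4 : (fun τ => f (gam2 • ModularGroup.S • τ)) =O[atImInfty] e) (γ : SL(2, ℤ)) :
    (fun τ => f (γ • τ)) =O[atImInfty] e := by
  obtain ⟨γ', hγ', δ, k, hδ, h⟩ := coset_lemma γ
  have h5 : (fun τ => f (δ • τ)) =O[atImInfty] e := by
    rcases hδ with rfl | rfl | rfl | rfl
    · simpa using h1
    · exact h2
    · exact h3
    · simpa [mul_smul] using h4
  have h6 := h5.comp_tendsto (tendsto_T_zpow k)
  refine (h6.congr (fun τ => ?_) (fun τ => ?_))
  · simp only [Function.comp]
    rw [h, hf γ' hγ']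
  · simp only [Function.comp]
    rw [he]

lemma const_of_bounded {f : ℍ → ℂ} (hd : MDifferentiable 𝓘(ℂ) 𝓘(ℂ) f)
    (hf : ∀ γ ∈ Gamma1 5, ∀ τ : ℍ, f (γ • τ) = f τ)
    (hb : ∀ γ : SL(2, ℤ), IsBoundedAtImInfty (fun τ => f (γ • τ))) : ∃ c, ∀ τ, f τ = c := by
  have hsl : ∀ γ : SL(2, ℤ), SlashAction.map (0 : ℤ) γ f = fun τ => f (γ • τ) := fun γ => by
    rw [ModularForm.SL_slash_def]; simp
  let F : ModularForm ((Gamma1 5 : Subgroup SL(2, ℤ)) : Subgroup (GL (Fin 2) ℝ)) 0 :=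
    { toFun := f
      slash_action_eq' := by
        rintro _ ⟨γ, hγ, rfl⟩
        have := hsl γ
        rw [ModularForm.SL_slash] at this
        refine this.trans ?_
        funext τ
        exact hf γ hγ τ
      holo' := hd
      bdd_at_cusps' := by
        intro c hc
        rw [Subgroup.IsArithmetic.isCusp_iff_isCusp_SL2Z] at hc
        rw [OnePoint.isBoundedAt_iff_forall_SL2Z hc]
        intro γ _
        rw [hsl]
        exact hb γ }
  obtain ⟨c, hc⟩ := ModularForm.eq_const_of_weight_zero F
  exact ⟨c, fun τ => congrFun hc τ⟩

lemma T5_conj_mem (γ : SL(2, ℤ)) : γ * ModularGroup.T ^ (5 : ℤ) * γ⁻¹ ∈ Gamma1 5 := by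
  refine mul_inv_mem_Gamma1 _ _ ?_ ?_
  · rw [Matrix.SpecialLinearGroup.coe_mul, ModularGroup.coe_T_zpow]
    simp [Matrix.mul_apply]
  · rw [Matrix.SpecialLinearGroup.coe_mul, ModularGroup.coe_T_zpow]
    simp [Matrix.mul_apply]
    rw [show (5 : ZMod 5) = 0 by decide, mul_zero]

lemma periodic_of_T5 {f : ℍ → ℂ} (hf : ∀ τ : ℍ, f (ModularGroup.T ^ (5 : ℤ) • τ) = f τ) :
    Function.Periodic (f ∘ ofComplex) (5 : ℝ) := by
  intro z
  by_cases hz : 0 < z.im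
  · have hz' : 0 < (z + (5 : ℝ)).im := by simpa using hz
    simp only [Function.comp]
    rw [ofComplex_apply_of_im_pos hz, ofComplex_apply_of_im_pos hz', ← hf ⟨z, hz⟩]
    congr 1
    ext1
    rw [ModularGroup.coe_T_zpow_smul_eq]
    simp
  · have hz' : ¬ 0 < (z + (5 : ℝ)).im := by simpa using hz
    simp only [Function.comp]
    rw [ofComplex_apply_of_im_nonpos (not_lt.mp hz), ofComplex_apply_of_im_nonpos (not_lt.mp hz')]

lemma mdiff_smul {f : ℍ → ℂ} (hd : MDifferentiable 𝓘(ℂ) 𝓘(ℂ) f) (γ : SL(2, ℤ)) :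
    MDifferentiable 𝓘(ℂ) 𝓘(ℂ) (fun τ => f (γ • τ)) :=
  hd.comp (UpperHalfPlane.mdifferentiable_smul (g := (γ : GL (Fin 2) ℝ)) (by simp))

/-- the local parameter at a cusp of width five -/
def ee (τ : ℍ) : ℝ := Real.exp (-2 * π * τ.im / 5)

lemma ee_pos (τ : ℍ) : 0 < ee τ := Real.exp_pos _

lemma ee_le_one (τ : ℍ) : ee τ ≤ 1 := by
  rw [ee, Real.exp_le_one_iff]
  have := mul_pos Real.pi_pos τ.im_pos
  linarith

lemma ee_T (k : ℤ) (τ : ℍ) : ee (ModularGroup.T ^ k • τ) = ee τ := by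
  rw [ee, ee, ModularGroup.im_T_zpow_smul]

lemma norm_qpow5 (n : ℤ) (τ : ℍ) : ‖qpow 5 n τ‖ = ee τ ^ n := by
  have : 2 * (π : ℂ) * Complex.I * ((n : ℂ) / ((5 : ℕ) : ℂ)) * τ =
    n * (((2 * π / 5 : ℝ) : ℂ) * (Complex.I * τ)) := by push_cast; ring
  rw [qpow, this, Complex.exp_int_mul, norm_zpow, Complex.norm_exp, Complex.re_ofReal_mul, ee]
  congr 2
  simp
  ring

lemma qpow_add (d : ℕ) (m n : ℤ) (τ : ℍ) : qpow d (m + n) τ = qpow d m τ * qpow d n τ := by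
  rw [qpow, qpow, qpow, ← Complex.exp_add]
  congr 1
  push_cast
  ring

lemma qpow_zero (d : ℕ) (τ : ℍ) : qpow d 0 τ = 1 := by simp [qpow]

lemma mdiff_qpow (d : ℕ) (n : ℤ) : MDifferentiable 𝓘(ℂ) 𝓘(ℂ) (qpow d n) := by
  rw [UpperHalfPlane.mdifferentiable_iff]
  have : DifferentiableOn ℂ (fun z => cexp (2 * (π : ℂ) * Complex.I * ((n : ℂ) / (d : ℂ)) * z))
    {z : ℂ | 0 < z.im} := by fun_prop
  refine this.congr fun z hz => ?_
  simp [UpperHalfPlane.ofComplex_apply_of_im_pos hz, qpow]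

lemma expansion_of_growth {f : ℍ → ℂ} (hd : MDifferentiable 𝓘(ℂ) 𝓘(ℂ) f)
    (hf : ∀ τ : ℍ, f (ModularGroup.T ^ (5 : ℤ) • τ) = f τ) {m : ℕ}
    (hb : f =O[atImInfty] fun τ => (ee τ)⁻¹ ^ m) : ∃ n₀ : ℤ, ∃ c : ℕ → ℂ,
    ∀ τ : ℍ, HasSum (fun n : ℕ => c n * qpow 5 (n₀ + n) τ) (f τ) := by
  set F : ℍ → ℂ := fun τ => qpow 5 m τ * f τ with hF
  have hFd : MDifferentiable 𝓘(ℂ) 𝓘(ℂ) F := (mdiff_qpow 5 m).mul hd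
  have hFp : Function.Periodic (F ∘ ofComplex) (5 : ℝ) := by
    refine periodic_of_T5 fun τ => ?_
    simp only [hF]
    rw [hf, qpow, qpow, ModularGroup.coe_T_zpow_smul_eq, mul_add, Complex.exp_add]
    have : 2 * (π : ℂ) * Complex.I * (((m : ℤ) : ℂ) / ((5 : ℕ) : ℂ)) * ((5 : ℤ) : ℂ) =
      ((m : ℤ) : ℂ) * (2 * π * Complex.I) := by push_cast; ring
    rw [this, Complex.exp_int_mul_two_pi_mul_I, mul_one]
  have hFb : IsBoundedAtImInfty F := by
    have h1 : (fun τ => qpow 5 m τ) =O[atImInfty] fun τ => (ee τ) ^ m := by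
      refine Asymptotics.IsBigO.of_bound 1 (Filter.Eventually.of_forall fun τ => ?_)
      rw [norm_qpow5, one_mul, zpow_natCast]
      exact le_abs_self _
    have h2 := h1.mul hb
    refine h2.congr (fun _ => rfl) fun τ => ?_
    rw [← mul_pow, mul_inv_cancel₀ (ee_pos τ).ne', one_pow]; rfl
  have hs := UpperHalfPlane.hasSum_qExpansion (h := 5) (by norm_num) hFp hFd hFb
  refine ⟨-m, fun n => (qExpansion 5 F).coeff n, fun τ => ?_⟩
  have h3 := (hs τ).mul_left (qpow 5 (-m) τ)
  have e1 : qpow 5 (-m) τ * F τ = f τ := by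
    simp only [hF]
    rw [← mul_assoc, ← qpow_add, neg_add_cancel, qpow_zero, one_mul]
  rw [e1] at h3
  refine h3.congr_fun fun n => ?_
  rw [qpow_add, smul_eq_mul]
  have : Function.Periodic.qParam 5 (τ : ℂ) ^ n = qpow 5 n τ := by
    rw [Function.Periodic.qParam, qpow, ← Complex.exp_nat_mul]
    congr 1
    push_cast
    ring
  rw [this]
  ring

/-! ### The value at the cusp zero -/

open Filter Topology in
lemma tendsto_theta (y : ℝ) : Tendsto (fun τ : ℍ => jacobiTheta₂ (y + 1 / 2 + τ / 2) τ) atImInfty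
    (𝓝 (1 - cexp (-(2 * π * Complex.I * y)))) := by
  classical
  set G : ℤ → ℂ := fun n => if n = 0 ∨ n = -1 then cexp (2 * π * Complex.I * n * (y + 1 / 2)) else 0
    with hG
  have hGs : ∑' n, G n = 1 - cexp (-(2 * π * Complex.I * y)) := by
    rw [tsum_eq_sum (s := {0, -1})]
    · rw [Finset.sum_pair (by decide)]
      simp only [hG]
      simp
      rw [show -(2 * (π : ℂ) * Complex.I * (y + 2⁻¹)) = -(π * Complex.I) + -(2 * π * Complex.I * y) by ring,
        Complex.exp_add, Complex.exp_neg (π * Complex.I), Complex.exp_pi_mul_I]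
      ring
    · intro n hn
      simp only [Finset.mem_insert, Finset.mem_singleton] at hn
      simp [hG, hn]
  rw [← hGs]
  have hnorm : ∀ (n : ℤ) (τ : ℍ), ‖jacobiTheta₂_term n (y + 1 / 2 + τ / 2) τ‖ =
      Real.exp (-π * (n * (n + 1)) * τ.im) := by
    intro n τ
    rw [norm_jacobiTheta₂_term]
    congr 1
    simp
    ring
  have hnn : ∀ n : ℤ, (0 : ℝ) ≤ n * (n + 1) := by
    intro n
    have : 0 ≤ n * (n + 1) := by
      rcases le_or_gt 0 n with h | h <;> nlinarith
    exact_mod_cast this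
  refine tendsto_tsum_of_dominated_convergence
    (bound := fun n => ‖jacobiTheta₂_term n (y + 1 / 2 + (UpperHalfPlane.I : ℂ) / 2) UpperHalfPlane.I‖)
    (hasSum_jacobiTheta₂_term _ UpperHalfPlane.I.im_pos).summable.norm ?_ ?_
  · intro n
    by_cases hn : n = 0 ∨ n = -1
    · refine Tendsto.congr (f₁ := fun _ => G n) (fun τ => ?_) tendsto_const_nhds
      simp only [hG, hn, if_true, jacobiTheta₂_term]
      congr 1
      have h2 : (n : ℂ) * (n + 1) = 0 := by rcases hn with rfl | rfl <;> simp
      linear_combination (-π * Complex.I * τ) * h2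
    · have h0 : G n = 0 := by simp only [hG, hn, if_false]
      rw [h0, tendsto_zero_iff_norm_tendsto_zero]
      simp_rw [hnorm]
      refine Real.tendsto_exp_atBot.comp ?_
      have h1 : (0 : ℝ) < n * (n + 1) := by
        have : 0 < n * (n + 1) := by
          push Not at hn
          rcases lt_or_gt_of_ne hn.1 with h | h
          · have : n ≤ -2 := by omega
            nlinarith
          · nlinarith
        exact_mod_cast this
      refine Tendsto.const_mul_atTop_of_neg (by nlinarith [Real.pi_pos]) tendsto_comap
  · have : ∀ᶠ τ : ℍ in atImInfty, 1 ≤ τ.im :=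
      (atImInfty_mem _).mpr ⟨1, fun z hz => hz⟩
    filter_upwards [this] with τ hτ n
    rw [hnorm, hnorm, Real.exp_le_exp]
    have := mul_nonneg Real.pi_pos.le (hnn n)
    simp only [UpperHalfPlane.I_im]
    nlinarith

lemma div5_im (τ : ℍ) : (div5 τ).im = τ.im / 5 := by
  rw [← UpperHalfPlane.coe_im, div5_coe]
  simp

lemma tendsto_div5 : Filter.Tendsto div5 atImInfty atImInfty := by
  have h : Filter.Tendsto UpperHalfPlane.im atImInfty Filter.atTop := Filter.tendsto_comap
  rw [atImInfty, Filter.tendsto_comap_iff]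
  refine (h.atTop_div_const (by norm_num : (0:ℝ) < 5)).congr fun τ => ?_
  rw [Function.comp, div5_im]

/-- the value of `gOne5` at the cusp zero -/
def cuspVal : ℂ := ((2 * Real.cos (π / 5)) ^ 5 : ℝ)

lemma cuspVal_eq : cuspVal ^ 2 - 11 * cuspVal - 1 = 0 := by
  have h : ((2 * Real.cos (π / 5)) ^ 5) ^ 2 - 11 * ((2 * Real.cos (π / 5)) ^ 5) - 1 = 0 := by
    rw [Real.cos_pi_div_five]
    have h5 : √5 ^ 2 = (5 : ℝ) := Real.sq_sqrt (by norm_num)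
    set φ : ℝ := 2 * ((1 + √5) / 4) with hφ
    have h2 : φ ^ 2 = φ + 1 := by rw [hφ]; linear_combination (1 / 4) * h5
    have h3 : φ ^ 5 = 5 * φ + 3 := by
      linear_combination (φ ^ 3 + φ ^ 2 + 2 * φ + 3) * h2
    rw [h3]
    linear_combination 25 * h2
  unfold cuspVal
  exact_mod_cast h

lemma cuspVal_ne_zero : cuspVal ≠ 0 := by
  intro h
  have := cuspVal_eq
  rw [h] at this
  norm_num at this

open Filter Topology in
lemma tendsto_gOne5_S :
    Tendsto (fun τ : ℍ => gOne5 (ModularGroup.S • τ)) atImInfty (𝓝 cuspVal) := by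
  have h1 := (tendsto_theta (1 / 5)).comp tendsto_div5
  have h2 := (tendsto_theta (2 / 5)).comp tendsto_div5
  set z : ℂ := cexp (π * Complex.I / 5) with hz
  have hz0 : z ≠ 0 := Complex.exp_ne_zero _
  have e1 : cexp (-(2 * π * Complex.I * ((1 / 5 : ℝ) : ℂ))) = z⁻¹ ^ 2 := by
    rw [hz, ← Complex.exp_neg, ← Complex.exp_nat_mul]
    congr 1; push_cast; ring
  have e2 : cexp (-(2 * π * Complex.I * ((2 / 5 : ℝ) : ℂ))) = z⁻¹ ^ 4 := by
    rw [hz, ← Complex.exp_neg, ← Complex.exp_nat_mul]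
    congr 1; push_cast; ring
  have hcos : ((2 * Real.cos (π / 5) : ℝ) : ℂ) = z + z⁻¹ := by
    rw [hz, ← Complex.exp_neg]
    push_cast
    rw [Complex.two_cos]
    congr 2 <;> ring
  have hne : (1 : ℂ) - z⁻¹ ^ 2 ≠ 0 := by
    intro h
    have h3 : z⁻¹ ^ 2 = 1 := by linear_combination -h
    have h4 : z ^ 5 = -1 := by
      rw [hz, ← Complex.exp_nat_mul, ← Complex.exp_pi_mul_I]
      congr 1; push_cast; ring
    have h5 : z ^ 2 = 1 := by
      rw [inv_pow] at h3
      exact inv_eq_one.mp h3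
    have h6 : z = -1 := by
      calc z = (z ^ 2) ^ 2 * z := by rw [h5]; ring
        _ = z ^ 5 := by ring
        _ = -1 := h4
    have h7 : (2 * Real.cos (π / 5) : ℝ) = -2 := by
      have : ((2 * Real.cos (π / 5) : ℝ) : ℂ) = ((-2 : ℝ) : ℂ) := by
        rw [hcos, h6]; push_cast; norm_num
      exact_mod_cast this
    have h8 : 0 < Real.cos (π / 5) := by
      rw [Real.cos_pi_div_five]; positivity
    linarith
  rw [e1] at h1
  rw [e2] at h2
  have h3 := ((h2.div h1 hne).const_mul z).pow 5
  have hlim : (z * ((1 - z⁻¹ ^ 4) / (1 - z⁻¹ ^ 2))) ^ 5 = cuspVal := by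
    rw [cuspVal]
    rw [Complex.ofReal_pow, hcos]
    congr 1
    have : (1 - z⁻¹ ^ 4) = (1 - z⁻¹ ^ 2) * (1 + z⁻¹ ^ 2) := by ring
    rw [this, mul_div_cancel_left₀ _ hne]
    field_simp
  rw [hlim] at h3
  refine h3.congr fun τ => ?_
  rw [gOne5_S]
  simp only [Pi.div_apply, Function.comp, div5_coe]
  congr 1
  unfold th
  push_cast
  rw [mul_div_mul_comm, ← Complex.exp_sub, hz]
  congr 2
  ring

lemma mdiff_gOne5_S : MDifferentiable 𝓘(ℂ) 𝓘(ℂ) (fun τ : ℍ => gOne5 (ModularGroup.S • τ)) :=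
  mdiff_smul mdiff_gOne5 _

/-- `u = g ^ 2 - 11 g - 1` -/
def uu (τ : ℍ) : ℂ := gOne5 τ ^ 2 - 11 * gOne5 τ - 1

lemma mdiff_uu : MDifferentiable 𝓘(ℂ) 𝓘(ℂ) uu := by
  have hd := mdiff_gOne5
  unfold uu
  rw [UpperHalfPlane.mdifferentiable_iff] at hd ⊢
  exact ((hd.pow 2).sub (hd.const_mul 11)).sub_const 1

lemma uu_Gamma1 (γ : SL(2, ℤ)) (hγ : γ ∈ Gamma1 5) (τ : ℍ) : uu (γ • τ) = uu τ := by
  rw [uu, uu, gOne5_Gamma1 γ hγ]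

lemma uu_gam2 (τ : ℍ) : uu (gam2 • τ) = -uu τ * (gOne5 τ)⁻¹ ^ 2 := by
  rw [uu, uu, gOne5_gam2]
  field_simp [gOne5_ne_zero τ]
  ring

lemma T5_smul_inv {f : ℍ → ℂ} (hf : ∀ γ ∈ Gamma1 5, ∀ τ : ℍ, f (γ • τ) = f τ) (γ : SL(2, ℤ)) (τ : ℍ) :
    f (γ • (ModularGroup.T ^ (5 : ℤ) • τ)) = f (γ • τ) := by
  rw [← hf _ (T5_conj_mem γ) (γ • τ)]
  congr 1
  rw [smul_smul, smul_smul]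
  congr 1
  group

lemma uu_S_isBigO : (fun τ => uu (ModularGroup.S • τ)) =O[atImInfty] ee := by
  have hlim : Filter.Tendsto (fun τ : ℍ => uu (ModularGroup.S • τ)) atImInfty (nhds 0) := by
    have h := tendsto_gOne5_S
    have := ((h.pow 2).sub (h.const_mul 11)).sub_const 1
    rw [cuspVal_eq] at this
    exact this
  have hz : IsZeroAtImInfty (fun τ : ℍ => uu (ModularGroup.S • τ)) := hlim
  exact hz.exp_decay_atImInfty (h := 5) (by norm_num)
    (periodic_of_T5 fun τ => T5_smul_inv uu_Gamma1 _ _) (mdiff_smul mdiff_uu _) hz.isBoundedAtImInfty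

/-! ### Nonvanishing of `u` -/

/-- the product part of the discriminant -/
def PP (τ : ℍ) : ℂ := ∏' n, (1 - ModularForm.eta_q n τ) ^ 24

lemma tendsto_PP : Filter.Tendsto PP atImInfty (nhds 1) :=
  ModularForm.tendsto_atImInfty_tprod_one_sub_eta_q_pow

lemma disc_eq (τ : ℍ) : ModularForm.discriminant τ = Q τ * PP τ := by
  rw [ModularForm.discriminant_eq_q_prod, PP, Q, Function.Periodic.qParam]
  simp

lemma PP_ne (τ : ℍ) : PP τ ≠ 0 := by
  intro h
  have := ModularForm.discriminant_ne_zero τ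
  rw [disc_eq, h, mul_zero] at this
  exact this rfl

lemma disc_smul (γ : SL(2, ℤ)) (τ : ℍ) : ModularForm.discriminant (γ • τ) =
    (denom γ τ) ^ (12 : ℤ) * ModularForm.discriminant τ := by
  have := SlashInvariantForm.slash_action_generators_SL2Z ModularForm.discriminant_S_invariant
    ModularForm.discriminant_T_invariant γ
  have h2 := congrFun this τ
  rw [ModularForm.SL_slash_apply] at h2
  rw [← h2, mul_comm, mul_assoc, ← zpow_add₀ (UpperHalfPlane.denom_ne_zero _ _)]
  simp

lemma mdiff_disc : MDifferentiable 𝓘(ℂ) 𝓘(ℂ) ModularForm.discriminant :=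
  (CuspForm.discriminant.holo')

/-- the quotient of discriminants -/
def DD (τ : ℍ) : ℂ := ModularForm.discriminant (hsmul 5 τ) * (ModularForm.discriminant τ)⁻¹

lemma DD_smul (γ : SL(2, ℤ)) (c' : ℤ) (hc : γ 1 0 = 5 * c') (τ : ℍ) : DD (γ • τ) = DD τ := by
  obtain ⟨γ', h1, h2, h3, h4, h5⟩ := hsmul5_smul γ c' hc
  rw [DD, DD, h5, disc_smul, disc_smul]
  have : denom γ' (hsmul 5 τ) = denom γ τ := by
    rw [ModularGroup.denom_apply, ModularGroup.denom_apply, h3, h4, hc, hsmul5_coe]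
    push_cast; ring
  rw [this]
  have h0 := zpow_ne_zero 12 (UpperHalfPlane.denom_ne_zero (γ : GL (Fin 2) ℝ) τ)
  have hd := ModularForm.discriminant_ne_zero τ
  field_simp

lemma mdiff_DD : MDifferentiable 𝓘(ℂ) 𝓘(ℂ) DD := by
  have h1 : MDifferentiable 𝓘(ℂ) 𝓘(ℂ) (fun τ => ModularForm.discriminant (hsmul 5 τ)) := by
    have hd := mdiff_disc
    rw [UpperHalfPlane.mdifferentiable_iff] at hd ⊢
    have h2 : DifferentiableOn ℂ (fun z : ℂ => 5 * z) {z : ℂ | 0 < z.im} := by fun_prop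
    have h3 := hd.comp h2 (fun z hz => by simpa using hz)
    refine h3.congr fun z hz => ?_
    have hz5 : 0 < (5 * z).im := by simpa using hz
    simp only [Function.comp]
    rw [UpperHalfPlane.ofComplex_apply_of_im_pos hz, UpperHalfPlane.ofComplex_apply_of_im_pos hz5]
    congr 1
  exact h1.mul (mdiff_inv mdiff_disc ModularForm.discriminant_ne_zero)

lemma Q_hsmul (τ : ℍ) : Q (hsmul 5 τ) = Q τ ^ 5 := by
  rw [hsmul5_coe, Q, Q, ← Complex.exp_nat_mul]
  congr 1; push_cast; ring

lemma DD_eq (τ : ℍ) : DD τ = Q τ ^ 4 * (PP (hsmul 5 τ) * (PP τ)⁻¹) := by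
  rw [DD, disc_eq, disc_eq, Q_hsmul]
  have := Q_ne τ
  field_simp

lemma DD_S (τ : ℍ) : DD (ModularGroup.S • τ) =
    (5 ^ 12)⁻¹ * (qpow 5 (-4) τ * (PP (div5 τ) * (PP τ)⁻¹)) := by
  rw [DD, hsmul5_S, disc_smul, disc_smul, disc_eq, disc_eq]
  obtain ⟨-, -, s3, s4⟩ := S_entries
  rw [ModularGroup.denom_apply, ModularGroup.denom_apply, s3, s4, div5_coe]
  have h1 : Q (τ / 5) = Q τ * qpow 5 (-4) τ := by
    rw [Q, Q, qpow, ← Complex.exp_add]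
    congr 1; push_cast; ring
  rw [h1]
  have := Q_ne τ
  have := PP_ne τ
  have := τ.ne_zero
  push_cast
  simp only [one_mul, add_zero]
  norm_cast
  field_simp
  push_cast
  ring

lemma tendsto_hsmul5 : Filter.Tendsto (hsmul 5) atImInfty atImInfty := by
  have h : Filter.Tendsto UpperHalfPlane.im atImInfty Filter.atTop := Filter.tendsto_comap
  rw [atImInfty, Filter.tendsto_comap_iff]
  refine (h.const_mul_atTop (by norm_num : (0:ℝ) < 5)).congr fun τ => ?_
  rw [Function.comp, ← UpperHalfPlane.coe_im (hsmul 5 τ), hsmul5_coe]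
  simp

lemma tendsto_Q : Filter.Tendsto (fun τ : ℍ => Q τ) atImInfty (nhds 0) := by
  refine (UpperHalfPlane.qParam_tendsto_atImInfty zero_lt_one).congr fun τ => ?_
  rw [Function.Periodic.qParam, Q]; simp

lemma tendsto_comp_Q {F : ℂ → ℂ} (hF : RatPS F) :
    Filter.Tendsto (fun τ : ℍ => F (Q τ)) atImInfty (nhds (F 0)) := by
  have h := hF.differentiableOn.continuousOn.continuousAt (Metric.ball_mem_nhds 0 one_pos)
  exact h.tendsto.comp tendsto_Q

/-- the power series of `u` -/
def UU (q : ℂ) : ℂ := AA q ^ 2 - (11 : ℚ) * q * AA q - q ^ 2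

lemma RatPS_UU : RatPS UU :=
  ((RatPS_AA.pow 2).sub (((RatPS.const 11).mul RatPS.X).mul RatPS_AA)).sub (RatPS.X.pow 2)

lemma UU_zero : UU 0 = 1 := by simp [UU, AA_zero]

lemma uu_eq (τ : ℍ) : uu τ = (Q τ)⁻¹ ^ 2 * UU (Q τ) := by
  rw [uu, gOne5_eq_AA, UU]
  have := Q_ne τ
  field_simp
  push_cast
  ring

lemma RatPS_AA_inv : RatPS (fun q => (AA q)⁻¹) := RatPS_AA.inv fun _ h => AA_ne_zero h

/-- `u / g` -/
def ww (τ : ℍ) : ℂ := uu τ * (gOne5 τ)⁻¹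

lemma ww_Gamma1 (γ : SL(2, ℤ)) (hγ : γ ∈ Gamma1 5) (τ : ℍ) : ww (γ • τ) = ww τ := by
  rw [ww, ww, uu_Gamma1 γ hγ, gOne5_Gamma1 γ hγ]

lemma ww_gam2 (τ : ℍ) : ww (gam2 • τ) = ww τ := by
  rw [ww, ww, uu_gam2, gOne5_gam2]
  have := gOne5_ne_zero τ
  field_simp

lemma mdiff_ww : MDifferentiable 𝓘(ℂ) 𝓘(ℂ) ww := mdiff_uu.mul (mdiff_inv mdiff_gOne5 gOne5_ne_zero)

lemma ww_S_isBigO : (fun τ => ww (ModularGroup.S • τ)) =O[atImInfty] ee := by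
  have h := (tendsto_gOne5_S.inv₀ cuspVal_ne_zero).isBigO_one ℝ
  have := uu_S_isBigO.mul h
  simpa [ww] using this

/-- the auxiliary constant function -/
def FF (τ : ℍ) : ℂ := ww τ ^ 4 * DD τ

lemma FF_tendsto : Filter.Tendsto FF atImInfty (nhds 1) := by
  have h1 := (((tendsto_comp_Q RatPS_UU).mul (tendsto_comp_Q RatPS_AA_inv)).pow 4).mul
    ((tendsto_PP.comp tendsto_hsmul5).mul (tendsto_PP.inv₀ one_ne_zero))
  rw [UU_zero, AA_zero] at h1
  simp only [inv_one, mul_one, one_pow] at h1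
  refine h1.congr fun τ => ?_
  rw [FF, ww, uu_eq, gOne5_eq_AA, DD_eq, Function.comp]
  have := Q_ne τ
  have := AA_ne_zero (norm_Q_lt τ)
  field_simp

lemma R_S_isBigO : (fun τ => PP (div5 τ) * (PP τ)⁻¹) =O[atImInfty] (fun _ => (1 : ℝ)) :=
  ((tendsto_PP.comp tendsto_div5).mul (tendsto_PP.inv₀ one_ne_zero)).isBigO_one ℝ

lemma DD_S_isBigO : (fun τ => DD (ModularGroup.S • τ)) =O[atImInfty] (fun τ => (ee τ)⁻¹ ^ 4) := by
  have h1 : (fun τ => qpow 5 (-4) τ) =O[atImInfty] fun τ => (ee τ)⁻¹ ^ 4 := by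
    refine Asymptotics.IsBigO.of_bound 1 (Filter.Eventually.of_forall fun τ => ?_)
    rw [norm_qpow5, one_mul, _root_.zpow_neg, inv_pow]
    exact le_abs_self _
  have h2 := ((h1.mul R_S_isBigO).const_mul_left ((5 ^ 12)⁻¹ : ℂ))
  refine h2.congr (fun τ => ?_) (fun τ => mul_one _)
  rw [DD_S]

lemma FF_S_isBigO : (fun τ => FF (ModularGroup.S • τ)) =O[atImInfty] (fun _ => (1 : ℝ)) := by
  refine ((ww_S_isBigO.pow 4).mul DD_S_isBigO).congr (fun τ => rfl) fun τ => ?_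
  rw [← mul_pow, mul_inv_cancel₀ (ee_pos τ).ne', one_pow]

lemma FF_gam2 (τ : ℍ) : FF (gam2 • τ) = FF τ := by
  rw [FF, FF, ww_gam2, DD_smul gam2 1 (by rw [gam2_entries.2.2.1]; rfl)]

lemma FF_Gamma1 (γ : SL(2, ℤ)) (hγ : γ ∈ Gamma1 5) (τ : ℍ) : FF (γ • τ) = FF τ := by
  have h := ((Gamma1_mem _ _).mp hγ).2.2
  rw [ZMod.intCast_zmod_eq_zero_iff_dvd] at h
  obtain ⟨c, hc⟩ := h
  rw [FF, FF, ww_Gamma1 γ hγ, DD_smul γ c (by exact_mod_cast hc)]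

lemma mdiff_FF : MDifferentiable 𝓘(ℂ) 𝓘(ℂ) FF := (mdiff_ww.pow 4).mul mdiff_DD

lemma FF_eq (τ : ℍ) : FF τ = 1 := by
  have h1 := FF_tendsto.isBigO_one ℝ
  obtain ⟨c, hc⟩ := const_of_bounded mdiff_FF FF_Gamma1 fun γ =>
    cusp_isBigO (e := fun _ => 1) (fun _ _ => rfl) FF_Gamma1 h1 (by simpa only [FF_gam2] using h1)
      FF_S_isBigO (by simpa only [FF_gam2] using FF_S_isBigO) γ
  have : FF = fun _ => c := funext hc
  have h2 := FF_tendsto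
  rw [this] at h2
  rw [hc]
  exact tendsto_nhds_unique tendsto_const_nhds h2

lemma uu_ne_zero (τ : ℍ) : uu τ ≠ 0 := by
  intro h
  have := FF_eq τ
  rw [FF, ww, h] at this
  simp at this

lemma uu_inv_S_isBigO :
    (fun τ => (uu (ModularGroup.S • τ))⁻¹) =O[atImInfty] (fun τ => (ee τ)⁻¹ ^ 4) := by
  have h1 : ∀ τ, (uu τ)⁻¹ = ww τ ^ 3 * DD τ * (gOne5 τ)⁻¹ := fun τ => by
    have := FF_eq τ
    rw [FF] at this
    have h2 := uu_ne_zero τ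
    refine inv_eq_of_mul_eq_one_right ?_
    rw [← this, ww]
    ring
  have h2 := (tendsto_gOne5_S.inv₀ cuspVal_ne_zero).isBigO_one ℝ
  have h3 : (fun τ => ww (ModularGroup.S • τ)) =O[atImInfty] (fun _ => (1 : ℝ)) :=
    ww_S_isBigO.trans (Asymptotics.IsBigO.of_bound 1 (Filter.Eventually.of_forall fun τ => by
      rw [Real.norm_of_nonneg (ee_pos τ).le]; simpa using ee_le_one τ))
  refine (((h3.pow 3).mul DD_S_isBigO).mul h2).congr (fun τ => ?_) (fun τ => ?_)
  · rw [h1]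
  · simp

lemma exists_Q {q : ℂ} (h0 : q ≠ 0) (h1 : ‖q‖ < 1) : ∃ τ : ℍ, Q τ = q := by
  refine ⟨⟨_, Function.Periodic.im_invQParam_pos_of_norm_lt_one one_pos h1 h0⟩, ?_⟩
  have := Function.Periodic.qParam_right_inv one_ne_zero h0
  rw [Function.Periodic.qParam] at this
  rw [Q]
  simpa using this

lemma UU_ne_zero {q : ℂ} (h1 : ‖q‖ < 1) : UU q ≠ 0 := by
  by_cases h0 : q = 0
  · rw [h0, UU_zero]; exact one_ne_zero
  · obtain ⟨τ, rfl⟩ := exists_Q h0 h1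
    intro h
    have := uu_ne_zero τ
    rw [uu_eq, h, mul_zero] at this
    exact this rfl

lemma RatPS_UU_inv : RatPS (fun q => (UU q)⁻¹) := RatPS_UU.inv fun _ h => UU_ne_zero h

/-! ### The three generators are weakly holomorphic -/

lemma qpow1_eq (n : ℤ) (τ : ℍ) : qpow 1 n τ = Q τ ^ n := by
  rw [qpow, Q, ← Complex.exp_int_mul]
  congr 1; push_cast; ring

lemma one_le_ee_inv (τ : ℍ) : 1 ≤ (ee τ)⁻¹ := (one_le_inv₀ (ee_pos τ)).mpr (ee_le_one τ)

lemma ee_pow_mono {a b : ℕ} (h : a ≤ b) :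
    (fun τ => (ee τ)⁻¹ ^ a) =O[atImInfty] (fun τ => (ee τ)⁻¹ ^ b) := by
  refine Asymptotics.IsBigO.of_bound 1 (Filter.Eventually.of_forall fun τ => ?_)
  have h1 := one_le_ee_inv τ
  rw [one_mul, Real.norm_of_nonneg (by positivity), Real.norm_of_nonneg (by positivity)]
  exact pow_le_pow_right₀ h1 h

lemma one_isBigO_ee (b : ℕ) : (fun _ => (1 : ℝ)) =O[atImInfty] (fun τ => (ee τ)⁻¹ ^ b) := by
  simpa using ee_pow_mono (Nat.zero_le b)

lemma isWeakly_of {f : ℍ → ℂ} {G : ℂ → ℂ} (n₀ : ℤ) (m : ℕ)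
    (hd : MDifferentiable 𝓘(ℂ) 𝓘(ℂ) f)
    (hf : ∀ γ ∈ Gamma1 5, ∀ τ : ℍ, f (γ • τ) = f τ)
    (hG : RatPS G) (hfG : ∀ τ, f τ = Q τ ^ n₀ * G (Q τ))
    (h1 : f =O[atImInfty] (fun τ => (ee τ)⁻¹ ^ m))
    (h2 : (fun τ => f (gam2 • τ)) =O[atImInfty] (fun τ => (ee τ)⁻¹ ^ m))
    (h3 : (fun τ => f (ModularGroup.S • τ)) =O[atImInfty] (fun τ => (ee τ)⁻¹ ^ m))
    (h4 : (fun τ => f (gam2 • ModularGroup.S • τ)) =O[atImInfty] (fun τ => (ee τ)⁻¹ ^ m)) :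
    IsWeaklyHolo1 5 f := by
  refine ⟨hd, hf, ?_, fun γ => ?_⟩
  · obtain ⟨p, hp⟩ := hG
    refine ⟨n₀, fun n => PowerSeries.coeff n p, fun τ => ?_⟩
    rw [hfG]
    refine ((hp _ (norm_Q_lt τ)).mul_left (Q τ ^ n₀)).congr_fun fun n => ?_
    rw [qpow1_eq, zpow_add₀ (Q_ne _), zpow_natCast]
    simp
    ring
  · refine expansion_of_growth (m := m) (mdiff_smul hd γ) (T5_smul_inv hf γ) ?_
    exact cusp_isBigO (fun k τ => by rw [ee_T]) hf h1 h2 h3 h4 γ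

lemma norm_Q_eq (τ : ℍ) : ‖Q τ‖ = ee τ ^ 5 := by
  have : Q τ = qpow 5 5 τ := by
    rw [Q, qpow]; congr 1; push_cast; ring
  rw [this, norm_qpow5]
  norm_cast

lemma Q_inv_isBigO : (fun τ : ℍ => (Q τ)⁻¹) =O[atImInfty] (fun τ => (ee τ)⁻¹ ^ 5) := by
  refine Asymptotics.IsBigO.of_bound 1 (Filter.Eventually.of_forall fun τ => ?_)
  rw [norm_inv, norm_Q_eq, one_mul, inv_pow]
  exact le_abs_self _

lemma gOne5_inv_eq (τ : ℍ) : (gOne5 τ)⁻¹ = Q τ * (AA (Q τ))⁻¹ := by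
  rw [gOne5_eq_AA, mul_inv, inv_inv]

lemma uu_inv_eq (τ : ℍ) : (uu τ)⁻¹ = Q τ ^ 2 * (UU (Q τ))⁻¹ := by
  rw [uu_eq, mul_inv, inv_pow, inv_inv]

lemma gOne5_growth : gOne5 =O[atImInfty] (fun τ => (ee τ)⁻¹ ^ 5) := by
  refine (Q_inv_isBigO.mul ((tendsto_comp_Q RatPS_AA).isBigO_one ℝ)).congr (fun τ => ?_) (fun τ => ?_)
  · rw [gOne5_eq_AA]
  · rw [mul_one]

lemma tendsto_gOne5_inv : Filter.Tendsto (fun τ => (gOne5 τ)⁻¹) atImInfty (nhds 0) := by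
  have := tendsto_Q.mul (tendsto_comp_Q RatPS_AA_inv)
  rw [zero_mul] at this
  exact this.congr fun τ => (gOne5_inv_eq τ).symm

lemma gOne5_inv_bdd : (fun τ => (gOne5 τ)⁻¹) =O[atImInfty] (fun _ => (1 : ℝ)) :=
  tendsto_gOne5_inv.isBigO_one ℝ

lemma gOne5_S_bdd : (fun τ => gOne5 (ModularGroup.S • τ)) =O[atImInfty] (fun _ => (1 : ℝ)) :=
  tendsto_gOne5_S.isBigO_one ℝ

lemma gOne5_inv_S_bdd : (fun τ => (gOne5 (ModularGroup.S • τ))⁻¹) =O[atImInfty] (fun _ => (1 : ℝ)) :=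
  (tendsto_gOne5_S.inv₀ cuspVal_ne_zero).isBigO_one ℝ

lemma weak_gOne5 : IsWeaklyHolo1 5 gOne5 := by
  refine isWeakly_of (-1) 5 mdiff_gOne5 gOne5_Gamma1 RatPS_AA (fun τ => ?_) gOne5_growth
    ?_ (gOne5_S_bdd.trans (one_isBigO_ee 5)) ?_
  · rw [gOne5_eq_AA, _root_.zpow_neg_one]
  · simp only [gOne5_gam2]
    exact gOne5_inv_bdd.neg_left.trans (one_isBigO_ee 5)
  · simp only [gOne5_gam2]
    exact gOne5_inv_S_bdd.neg_left.trans (one_isBigO_ee 5)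

lemma weak_gOne5_inv : IsWeaklyHolo1 5 (fun τ => (gOne5 τ)⁻¹) := by
  refine isWeakly_of 1 5 (mdiff_inv mdiff_gOne5 gOne5_ne_zero)
    (fun γ hγ τ => by rw [gOne5_Gamma1 γ hγ]) RatPS_AA_inv (fun τ => ?_)
    (gOne5_inv_bdd.trans (one_isBigO_ee 5))
    ?_ (gOne5_inv_S_bdd.trans (one_isBigO_ee 5)) ?_
  · rw [gOne5_inv_eq, zpow_one]
  · simp only [gOne5_gam2, inv_neg, inv_inv]
    exact gOne5_growth.neg_left
  · simp only [gOne5_gam2, inv_neg, inv_inv]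
    exact gOne5_S_bdd.neg_left.trans (one_isBigO_ee 5)

lemma uu_inv_gam2 (τ : ℍ) : (uu (gam2 • τ))⁻¹ = -(gOne5 τ ^ 2 * (uu τ)⁻¹) := by
  rw [uu_gam2]
  have := gOne5_ne_zero τ
  have := uu_ne_zero τ
  field_simp

lemma weak_uu_inv : IsWeaklyHolo1 5 (fun τ => (uu τ)⁻¹) := by
  refine isWeakly_of 2 5 (mdiff_inv mdiff_uu uu_ne_zero)
    (fun γ hγ τ => by rw [uu_Gamma1 γ hγ]) RatPS_UU_inv (fun τ => ?_)
    ?_ ?_ (uu_inv_S_isBigO.trans (ee_pow_mono (by norm_num))) ?_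
  · rw [uu_inv_eq]; norm_cast
  · have := ((tendsto_Q.pow 2).mul (tendsto_comp_Q RatPS_UU_inv)).isBigO_one ℝ
    simp only [uu_inv_eq]
    exact this.trans (one_isBigO_ee 5)
  · have := (((tendsto_comp_Q RatPS_AA).pow 2).mul (tendsto_comp_Q RatPS_UU_inv)).isBigO_one ℝ
    refine (this.neg_left.trans (one_isBigO_ee 5)).congr_left fun τ => ?_
    rw [uu_inv_gam2, uu_inv_eq, gOne5_eq_AA]
    have := Q_ne τ
    field_simp
  · have := ((gOne5_S_bdd.pow 2).mul uu_inv_S_isBigO).neg_left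
    simp only [uu_inv_gam2]
    refine (this.congr_right fun τ => ?_).trans (ee_pow_mono (a := 4) (b := 5) (by norm_num))
    rw [one_pow, one_mul]

/-! ### Generation -/

lemma growth_of_expansion {f : ℍ → ℂ} (h : ∃ n₀ : ℤ, ∃ c : ℕ → ℂ,
    ∀ τ : ℍ, HasSum (fun n : ℕ => c n * qpow 5 (n₀ + n) τ) (f τ)) :
    ∃ m : ℕ, f =O[atImInfty] (fun τ => (ee τ)⁻¹ ^ m) := by
  obtain ⟨n₀, c, hc⟩ := h
  refine ⟨n₀.natAbs, ?_⟩
  set e₀ := ee UpperHalfPlane.I with he₀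
  have h0 : 0 < e₀ := ee_pos _
  have hs : Summable fun n : ℕ => ‖c n‖ * e₀ ^ n := by
    have h1 := (hc UpperHalfPlane.I).summable.norm.mul_left (e₀ ^ (-n₀))
    refine h1.congr fun n => ?_
    rw [norm_mul, norm_qpow5, ← he₀, zpow_add₀ h0.ne', zpow_natCast, _root_.zpow_neg]
    have := zpow_ne_zero n₀ h0.ne'
    field_simp
  refine Asymptotics.IsBigO.of_bound (∑' n : ℕ, ‖c n‖ * e₀ ^ n) ?_
  have : ∀ᶠ τ : ℍ in atImInfty, 1 ≤ τ.im :=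
      (atImInfty_mem _).mpr ⟨1, fun z hz => hz⟩
  filter_upwards [this] with τ hτ
  have hle : ee τ ≤ e₀ := by
    rw [he₀, ee, ee, Real.exp_le_exp, UpperHalfPlane.I_im]
    have := Real.pi_pos
    have := mul_le_mul_of_nonneg_left hτ this.le
    linarith
  have hE := ee_pos τ
  have h1 : ‖f τ‖ ≤ ∑' n : ℕ, ‖c n‖ * e₀ ^ n * ee τ ^ n₀ := by
    rw [← (hc τ).tsum_eq]
    refine tsum_of_norm_bounded (hs.mul_right _).hasSum fun n => ?_
    rw [norm_mul, norm_qpow5, zpow_add₀ hE.ne', zpow_natCast, mul_assoc, mul_comm (e₀ ^ n)]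
    gcongr
  rw [tsum_mul_right] at h1
  refine h1.trans ?_
  have h3 : ee τ ^ n₀ ≤ ‖(ee τ)⁻¹ ^ n₀.natAbs‖ := by
    rw [Real.norm_of_nonneg (by positivity), ← zpow_natCast, _root_.inv_zpow, ← _root_.zpow_neg]
    exact zpow_le_zpow_right_of_le_one₀ hE (ee_le_one τ) (by omega)
  gcongr

lemma ratPS_of_expansion {h : ℍ → ℂ} {n₀ : ℤ} {c : ℕ → ℚ}
    (hc : ∀ τ : ℍ, HasSum (fun n : ℕ => (c n : ℂ) * qpow 1 (n₀ + n) τ) (h τ)) :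
    ∃ E, RatPS E ∧ ∀ τ : ℍ, h τ = Q τ ^ n₀ * E (Q τ) := by
  have key : ∀ τ : ℍ, HasSum (fun n : ℕ => (c n : ℂ) * Q τ ^ n) (Q τ ^ (-n₀) * h τ) := fun τ => by
    refine ((hc τ).mul_left (Q τ ^ (-n₀))).congr_fun fun n => ?_
    have h0 := zpow_ne_zero n₀ (Q_ne τ)
    rw [qpow1_eq, zpow_add₀ (Q_ne _), zpow_natCast, _root_.zpow_neg]
    field_simp
  refine ⟨fun q => ∑' n : ℕ, (c n : ℂ) * q ^ n, ⟨PowerSeries.mk c, fun q hq => ?_⟩, fun τ => ?_⟩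
  · have : Summable fun n : ℕ => (c n : ℂ) * q ^ n := by
      by_cases h0 : q = 0
      · refine summable_of_ne_finset_zero (s := {0}) fun n hn => ?_
        simp only [Finset.mem_singleton] at hn
        simp [h0, hn]
      · obtain ⟨τ, rfl⟩ := exists_Q h0 hq
        exact (key τ).summable
    refine this.hasSum.congr_fun fun n => ?_
    simp
  · simp only
    rw [(key τ).tsum_eq, ← mul_assoc, ← zpow_add₀ (Q_ne _)]
    simp

lemma principal_part (M : ℕ) : ∀ (f : ℍ → ℂ) (E : ℂ → ℂ), RatPS E →
    (∀ τ : ℍ, f τ = (Q τ)⁻¹ ^ M * E (Q τ)) →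
    ∃ (p : Polynomial ℚ) (E' : ℂ → ℂ), RatPS E' ∧
      ∀ τ : ℍ, f τ - Polynomial.aeval (gOne5 τ) p = E' (Q τ) := by
  induction M with
  | zero => exact fun f E hE hf => ⟨0, E, hE, fun τ => by simp [hf]⟩
  | succ M ih =>
    intro f E hE hf
    obtain ⟨c, hc⟩ := hE.at_zero
    have hE2 := hE.sub ((RatPS.const c).mul (RatPS_AA.pow (M + 1)))
    obtain ⟨G, hG, hG'⟩ := hE2.divX (by simp [hc, AA_zero])
    obtain ⟨p, E', hE', hp⟩ := ih (fun τ => f τ - c * gOne5 τ ^ (M + 1)) G hG (fun τ => by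
      have h1 := hG' _ (norm_Q_lt τ)
      have h0 := Q_ne τ
      rw [hf, gOne5_eq_AA, mul_pow]
      calc _ = (Q τ)⁻¹ ^ (M + 1) * (E (Q τ) - c * AA (Q τ) ^ (M + 1)) := by ring
        _ = _ := by
          rw [h1, pow_succ]
          field_simp)
    refine ⟨p + Polynomial.C c * Polynomial.X ^ (M + 1), E', hE', fun τ => ?_⟩
    rw [← hp]
    simp
    ring

lemma main_gen (h : ℍ → ℂ) (hh : IsWeaklyHolo1 5 h) : ∃ (p : Polynomial ℚ) (m : ℕ),
    ∀ τ : ℍ, h τ = Polynomial.aeval (gOne5 τ) p * (uu τ)⁻¹ ^ m * (gOne5 τ)⁻¹ ^ m := by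
  obtain ⟨hd, hinv, ⟨n₀, c, hc⟩, hcusp⟩ := hh
  obtain ⟨E, hE, hhE⟩ := ratPS_of_expansion hc
  obtain ⟨m₂, hm₂⟩ := growth_of_expansion (hcusp gam2)
  obtain ⟨m₃, hm₃⟩ := growth_of_expansion (hcusp ModularGroup.S)
  obtain ⟨m₄, hm₄⟩ := growth_of_expansion (hcusp (gam2 * ModularGroup.S))
  set m := m₂ + m₃ + m₄ with hm
  replace hm₂ := hm₂.trans (ee_pow_mono (show m₂ ≤ m by omega))
  replace hm₃ := hm₃.trans (ee_pow_mono (show m₃ ≤ m by omega))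
  replace hm₄ := hm₄.trans (ee_pow_mono (show m₄ ≤ m by omega))
  set f : ℍ → ℂ := fun τ => h τ * uu τ ^ m * gOne5 τ ^ m with hf
  have hfd : MDifferentiable 𝓘(ℂ) 𝓘(ℂ) f := (hd.mul (mdiff_uu.pow m)).mul (mdiff_gOne5.pow m)
  have cancel : ∀ τ : ℍ, (ee τ)⁻¹ ^ m * ee τ ^ m = 1 := fun τ => by
    rw [← mul_pow, inv_mul_cancel₀ (ee_pos τ).ne', one_pow]
  have hf2 : (fun τ => f (gam2 • τ)) =O[atImInfty] (fun _ => (1 : ℝ)) := by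
    have hu : (fun τ => uu (gam2 • τ)) =O[atImInfty] (fun _ => (1 : ℝ)) := by
      have := (((tendsto_comp_Q RatPS_AA_inv).pow 2).mul (tendsto_comp_Q RatPS_UU)).isBigO_one ℝ
      refine this.neg_left.congr_left fun τ => ?_
      rw [uu_gam2, uu_eq, gOne5_eq_AA]
      have := Q_ne τ
      have := AA_ne_zero (norm_Q_lt τ)
      field_simp
    have hg : (fun τ => gOne5 (gam2 • τ)) =O[atImInfty] ee := by
      have hq : (fun τ : ℍ => Q τ) =O[atImInfty] ee := by
        refine Asymptotics.IsBigO.of_bound 1 (Filter.Eventually.of_forall fun τ => ?_)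
        rw [norm_Q_eq, one_mul, Real.norm_of_nonneg (ee_pos τ).le]
        exact pow_le_of_le_one (ee_pos τ).le (ee_le_one τ) (by norm_num)
      have := (hq.mul ((tendsto_comp_Q RatPS_AA_inv).isBigO_one ℝ)).neg_left
      refine this.congr (fun τ => ?_) (fun τ => mul_one _)
      rw [gOne5_gam2, gOne5_inv_eq]
    refine ((hm₂.mul (hu.pow m)).mul (hg.pow m)).congr (fun τ => rfl) fun τ => ?_
    rw [one_pow, mul_one, cancel]
  have hf3 : (fun τ => f (ModularGroup.S • τ)) =O[atImInfty] (fun _ => (1 : ℝ)) := by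
    refine ((hm₃.mul (uu_S_isBigO.pow m)).mul (gOne5_S_bdd.pow m)).congr (fun τ => rfl) fun τ => ?_
    rw [one_pow, mul_one, cancel]
  have hf4 : (fun τ => f (gam2 • ModularGroup.S • τ)) =O[atImInfty] (fun _ => (1 : ℝ)) := by
    have hu : (fun τ => uu (gam2 • ModularGroup.S • τ)) =O[atImInfty] ee := by
      simp only [uu_gam2]
      refine (uu_S_isBigO.neg_left.mul (gOne5_inv_S_bdd.pow 2)).congr_right fun τ => ?_
      rw [one_pow, mul_one]
    have hg : (fun τ => gOne5 (gam2 • ModularGroup.S • τ)) =O[atImInfty] (fun _ => (1 : ℝ)) := by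
      simp only [gOne5_gam2]
      exact gOne5_inv_S_bdd.neg_left
    simp only [mul_smul] at hm₄
    refine ((hm₄.mul (hu.pow m)).mul (hg.pow m)).congr (fun τ => rfl) fun τ => ?_
    rw [one_pow, mul_one, cancel]

  obtain ⟨M, k, hMk⟩ : ∃ M k : ℕ, n₀ - 3 * m = -(M : ℤ) + k :=
    ⟨(3 * m - n₀).toNat, (n₀ - 3 * m).toNat, by omega⟩
  obtain ⟨p, E', hE', hp⟩ := principal_part M f
    (fun q => q ^ k * (E q * UU q ^ m * AA q ^ m))
    ((RatPS.X.pow k).mul ((hE.mul (RatPS_UU.pow m)).mul (RatPS_AA.pow m))) (fun τ => by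
      have h0 := Q_ne τ
      have e1 : Q τ ^ n₀ * ((Q τ)⁻¹ ^ (2 * m) * (Q τ)⁻¹ ^ m) = (Q τ)⁻¹ ^ M * Q τ ^ k := by
        rw [← pow_add, ← zpow_natCast, ← zpow_natCast, ← zpow_natCast, _root_.inv_zpow', _root_.inv_zpow',
          ← zpow_add₀ h0, ← zpow_add₀ h0, ← hMk]
        congr 1
        push_cast
        ring
      simp only [hf]
      rw [hhE, uu_eq, gOne5_eq_AA]
      linear_combination (E (Q τ) * UU (Q τ) ^ m * AA (Q τ) ^ m) * e1)
  set F : ℍ → ℂ := fun τ => f τ - Polynomial.aeval (gOne5 τ) p with hF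
  have hFd : MDifferentiable 𝓘(ℂ) 𝓘(ℂ) F := by
    have : F = fun τ : ℍ => E' (Q τ) := funext hp
    rw [this]
    exact mdiff_comp_Q hE'.differentiableOn
  have hpt : ∀ {v : ℍ → ℂ} {a : ℂ}, Filter.Tendsto v atImInfty (nhds a) →
      (fun τ => Polynomial.aeval (v τ) p) =O[atImInfty] (fun _ => (1 : ℝ)) := fun {v a} hv =>
    (((Polynomial.continuous_aeval p).tendsto a).comp hv).isBigO_one ℝ
  have hlim : Filter.Tendsto F atImInfty (nhds (E' 0)) :=
    (tendsto_comp_Q hE').congr fun τ => (hp τ).symm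
  have hFinv : ∀ γ ∈ Gamma1 5, ∀ τ : ℍ, F (γ • τ) = F τ := fun γ hγ τ => by
    simp only [hF, hf]
    rw [hinv γ hγ, uu_Gamma1 γ hγ, gOne5_Gamma1 γ hγ]
  obtain ⟨C, hC⟩ := const_of_bounded hFd hFinv fun γ =>
    cusp_isBigO (e := fun _ => 1) (fun _ _ => rfl) hFinv (hlim.isBigO_one ℝ)
      (hf2.sub (hpt (a := 0) (by
        simp only [gOne5_gam2]; simpa using tendsto_gOne5_inv.neg)))
      (hf3.sub (hpt tendsto_gOne5_S))
      (hf4.sub (hpt (a := -cuspVal⁻¹) (by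
        simp only [gOne5_gam2]; exact (tendsto_gOne5_S.inv₀ cuspVal_ne_zero).neg))) γ
  obtain ⟨r, hr⟩ := hE'.at_zero
  have hCr : C = r := by
    have : F = fun _ => C := funext hC
    rw [this, hr] at hlim
    exact tendsto_nhds_unique tendsto_const_nhds hlim
  refine ⟨p + Polynomial.C r, m, fun τ => ?_⟩
  have h1 := hC τ
  simp only [hF, hf] at h1
  rw [map_add, Polynomial.aeval_C, show (algebraMap ℚ ℂ) r = (r : ℂ) from rfl, ← hCr, ← h1]
  have e1 : uu τ ^ m * (uu τ)⁻¹ ^ m = 1 := by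
    rw [← mul_pow, mul_inv_cancel₀ (uu_ne_zero τ), one_pow]
  have e2 : gOne5 τ ^ m * (gOne5 τ)⁻¹ ^ m = 1 := by
    rw [← mul_pow, mul_inv_cancel₀ (gOne5_ne_zero τ), one_pow]
  calc h τ = h τ * (uu τ ^ m * (uu τ)⁻¹ ^ m) * (gOne5 τ ^ m * (gOne5 τ)⁻¹ ^ m) := by
        rw [e1, e2, mul_one, mul_one]
    _ = _ := by ring

/-- `O_{1,5}(ℚ) = ℚ[g_{1,5}, g_{1,5}⁻¹, (g_{1,5}² - 11g_{1,5} - 1)⁻¹]`. -/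
theorem statement15 :
    IsWeaklyHolo1 5 gOne5 ∧
    IsWeaklyHolo1 5 (fun τ => (gOne5 τ)⁻¹) ∧
    IsWeaklyHolo1 5 (fun τ => (gOne5 τ ^ 2 - 11 * gOne5 τ - 1)⁻¹) ∧
    (∀ h : ℍ → ℂ, IsWeaklyHolo1 5 h →
      ∃ P : MvPolynomial (Fin 3) ℚ, ∀ τ : ℍ,
        h τ = MvPolynomial.aeval
          ![gOne5 τ, (gOne5 τ)⁻¹, (gOne5 τ ^ 2 - 11 * gOne5 τ - 1)⁻¹] P) := by
  refine ⟨weak_gOne5, weak_gOne5_inv, weak_uu_inv, fun h hh => ?_⟩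
  obtain ⟨p, m, hp⟩ := main_gen h hh
  refine ⟨Polynomial.aeval (MvPolynomial.X 0) p * MvPolynomial.X 2 ^ m * MvPolynomial.X 1 ^ m,
    fun τ => ?_⟩
  rw [hp τ, map_mul, map_mul, ← Polynomial.aeval_algHom_apply]
  simp [uu]
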